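/- Let F ∈ R^{l×m} with l < m and rank r (1 ≤ r ≤ l), and suppose J_r(F) = R. Then there exists a square matrix F'_1 ∈ R^{r×r} such that F is equivalent to the l×m block matrix with F'_1 in the upper-left r×r corner and zeros elsewhere; moreover det(F'_1) is associated to d_r(F), and J_k(F'_1) = J_k(F) for every k = 1, …, r. -/

import Mathlib

open MvPolynomial Matrix

section Defs

variable {A : Type*} [CommRing A]

/-- The set of all `k × k` minors of a matrix. -/
def minorsSet {l m : ℕ} (F : Matrix (Fin l) (Fin m) A) (k : ℕ) : Set A :=
  { p | ∃ (r : Fin k ↪ Fin l) (c : Fin k ↪ Fin m), p = (F.submatrix ⇑r ⇑c).det }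

/-- `d` is a greatest common divisor of the `k × k` minors of `F`. -/
def IsGcdMinors {l m : ℕ} (F : Matrix (Fin l) (Fin m) A) (k : ℕ) (d : A) : Prop :=
  (∀ p ∈ minorsSet F k, d ∣ p) ∧ ∀ e : A, (∀ p ∈ minorsSet F k, e ∣ p) → e ∣ d

/-- The ideal generated by the `k × k` reduced minors of `F`, relative to a gcd `d`
of the `k × k` minors (the reduced minors are the `v` with `d * v` a minor). -/
def reducedIdeal {l m : ℕ} (F : Matrix (Fin l) (Fin m) A) (k : ℕ) (d : A) : Ideal A :=
  Ideal.span { v : A | d * v ∈ minorsSet F k }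

/-- `J_k(F) = R`: the `k × k` reduced minors of `F` generate the unit ideal. -/
def JkUnit {l m : ℕ} (F : Matrix (Fin l) (Fin m) A) (k : ℕ) : Prop :=
  ∃ d : A, IsGcdMinors F k d ∧ reducedIdeal F k d = ⊤

/-- `F` has rank `r`: some `r × r` minor is nonzero and all `(r+1) × (r+1)` minors vanish. -/
def HasRank {l m : ℕ} (F : Matrix (Fin l) (Fin m) A) (r : ℕ) : Prop :=
  (∃ p ∈ minorsSet F r, p ≠ 0) ∧ ∀ p ∈ minorsSet F (r + 1), p = 0

/-- Equivalence of matrices: `F₁ = U * F₂ * V` for unimodular `U`, `V`. -/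
def MatEquiv {l m : ℕ} (F₁ F₂ : Matrix (Fin l) (Fin m) A) : Prop :=
  ∃ (U : Matrix (Fin l) (Fin l) A) (V : Matrix (Fin m) (Fin m) A),
    IsUnit U.det ∧ IsUnit V.det ∧ F₁ = U * F₂ * V

/-- The rectangular diagonal matrix with diagonal entries `Φ`. -/
def smithDiag {l m : ℕ} (Φ : Fin l → A) : Matrix (Fin l) (Fin m) A :=
  Matrix.of fun i j => if (i : ℕ) = (j : ℕ) then Φ i else 0

/-- `F` (of rank `r`) is equivalent to its Smith form: there are diagonal entries `Φ` such that
for each `i ≤ r` the product `Φ_1 ⋯ Φ_i` is a gcd of the `i × i` minors of `F`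
(i.e. `Φ_i = d_i(F)/d_{i-1}(F)`), `Φ_i = 0` for `i > r`, and `F` is equivalent to
the diagonal matrix with entries `Φ`. -/
def SmithEquivAt {l m : ℕ} (F : Matrix (Fin l) (Fin m) A) (r : ℕ) : Prop :=
  ∃ Φ : Fin l → A,
    (∀ i : Fin l, (i : ℕ) < r →
      IsGcdMinors F ((i : ℕ) + 1) (∏ j ∈ Finset.Iic i, Φ j)) ∧
    (∀ i : Fin l, r ≤ (i : ℕ) → Φ i = 0) ∧
    MatEquiv F (smithDiag Φ)

/-- `F` is equivalent to its Smith form. -/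
def EquivToSmith {l m : ℕ} (F : Matrix (Fin l) (Fin m) A) : Prop :=
  ∃ r : ℕ, HasRank F r ∧ SmithEquivAt F r

end Defs


/-- Two vectors in the same `GL`-orbit. -/
def VEq {ι S : Type*} [Fintype ι] [DecidableEq ι] [CommRing S] (v w : ι → S) : Prop :=
  ∃ M N : Matrix ι ι S, N * M = 1 ∧ M * N = 1 ∧ M.mulVec v = w

section VEq
variable {ι κ S T : Type*} [Fintype ι] [DecidableEq ι] [Fintype κ] [DecidableEq κ]
  [CommRing S] [CommRing T]

lemma VEq.refl (v : ι → S) : VEq v v := ⟨1, 1, by simp, by simp, by simp⟩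

lemma VEq.of_eq {v w : ι → S} (h : v = w) : VEq v w := h ▸ VEq.refl v

lemma VEq.symm {v w : ι → S} (h : VEq v w) : VEq w v := by
  obtain ⟨M, N, h1, h2, h3⟩ := h
  exact ⟨N, M, h2, h1, by rw [← h3, Matrix.mulVec_mulVec, h1, Matrix.one_mulVec]⟩

lemma VEq.trans {u v w : ι → S} (h : VEq u v) (h' : VEq v w) : VEq u w := by
  obtain ⟨M, N, h1, h2, h3⟩ := h
  obtain ⟨M', N', h1', h2', h3'⟩ := h'
  refine ⟨M' * M, N * N', ?_, ?_, ?_⟩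
  · rw [Matrix.mul_assoc, ← Matrix.mul_assoc N', h1', Matrix.one_mul, h1]
  · rw [Matrix.mul_assoc, ← Matrix.mul_assoc M, h2, Matrix.one_mul, h2']
  · rw [← Matrix.mulVec_mulVec, h3, h3']

lemma VEq.map (φ : S →+* T) {v w : ι → S} (h : VEq v w) : VEq (φ ∘ v) (φ ∘ w) := by
  obtain ⟨M, N, h1, h2, h3⟩ := h
  refine ⟨M.map φ, N.map φ, ?_, ?_, ?_⟩
  · rw [← Matrix.map_mul, h1]; simp
  · rw [← Matrix.map_mul, h2]; simp
  · rw [← h3]; ext i; simp [RingHom.map_mulVec]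

lemma VEq.reindex (e : κ ≃ ι) {v w : ι → S} (h : VEq (v ∘ e) (w ∘ e)) : VEq v w := by
  obtain ⟨M, N, h1, h2, h3⟩ := h
  refine ⟨M.submatrix e.symm e.symm, N.submatrix e.symm e.symm, ?_, ?_, ?_⟩
  · rw [Matrix.submatrix_mul_equiv, h1]; simp
  · rw [Matrix.submatrix_mul_equiv, h2]; simp
  · rw [Matrix.submatrix_mulVec_equiv]
    ext i
    simp [h3]

lemma VEq.perm (e : Equiv.Perm ι) (v : ι → S) : VEq v (v ∘ e) := by
  refine ⟨(1 : Matrix ι ι S).submatrix e id, (1 : Matrix ι ι S).submatrix id e, ?_, ?_, ?_⟩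
  · ext i j
    simp only [Matrix.mul_apply, Matrix.one_apply, Matrix.submatrix_apply, id]
    rw [Equiv.sum_comp e (fun k => (if i = k then (1 : S) else 0) * if k = j then 1 else 0)]
    simp
  · ext i j
    simp [Matrix.mul_apply, Matrix.one_apply]
  · ext i; simp [Matrix.mulVec, dotProduct, Matrix.one_apply]

/-- Adding multiples of the `i`-th coordinate to the others. -/
lemma VEq.add (i : ι) (c : ι → S) (hc : c i = 0) (v : ι → S) : VEq v (v + fun j => c j * v i) := by
  have key : Matrix.vecMulVec c (Pi.single i 1) * Matrix.vecMulVec c (Pi.single i (1 : S)) = 0 := by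
    rw [Matrix.vecMulVec_mul_vecMulVec]; simp [hc]
  refine ⟨1 + Matrix.vecMulVec c (Pi.single i 1), 1 - Matrix.vecMulVec c (Pi.single i 1), ?_, ?_, ?_⟩
  · simp [sub_mul, mul_add, key]
  · simp [add_mul, mul_sub, key]
  · ext j; simp [Matrix.vecMulVec_apply, Matrix.mulVec, dotProduct, Finset.sum_add_distrib, Pi.single_apply, Matrix.one_apply, add_mul]

/-- Adding to the `i`-th coordinate a combination of the others. -/
lemma VEq.add' (i : ι) (c : ι → S) (hc : c i = 0) (v : ι → S) :
    VEq v (v + Pi.single i (∑ j, c j * v j)) := by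
  have key : Matrix.vecMulVec (Pi.single i 1) c * Matrix.vecMulVec (Pi.single i (1 : S)) c = 0 := by
    rw [Matrix.vecMulVec_mul_vecMulVec]; simp [hc]
  refine ⟨1 + Matrix.vecMulVec (Pi.single i 1) c, 1 - Matrix.vecMulVec (Pi.single i 1) c, ?_, ?_, ?_⟩
  · simp [sub_mul, mul_add, key]
  · simp [add_mul, mul_sub, key]
  · ext j
    simp only [Matrix.add_mulVec, Matrix.one_mulVec, Pi.add_apply, Matrix.vecMulVec_mulVec]
    simp [dotProduct, Pi.single_apply]

lemma VEq.smul_unit (i : ι) (u : Sˣ) (v : ι → S) :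
    VEq v (fun j => if j = i then u * v j else v j) := by
  refine ⟨Matrix.diagonal (fun j => if j = i then (u : S) else 1),
    Matrix.diagonal (fun j => if j = i then ((u⁻¹ : Sˣ) : S) else 1), ?_, ?_, ?_⟩
  · rw [Matrix.diagonal_mul_diagonal, ← Matrix.diagonal_one]; congr; ext j; split_ifs <;> simp
  · rw [Matrix.diagonal_mul_diagonal, ← Matrix.diagonal_one]; congr; ext j; split_ifs <;> simp
  · ext j; simp [Matrix.mulVec_diagonal]

/-- a vector with a unit coordinate can be moved to a basis vector -/
lemma VEq.of_isUnit (i : ι) (v : ι → S) (h : IsUnit (v i)) : VEq v (Pi.single i 1) := by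
  obtain ⟨u, hu⟩ := h
  refine (VEq.smul_unit i u⁻¹ v).trans ?_
  refine (VEq.add i (fun j => if j = i then 0 else - v j) (by simp) _).trans ?_
  refine VEq.of_eq ?_
  ext j
  by_cases hj : j = i
  · subst hj; simp [← hu]
  · simp [hj, ← hu]

lemma VEq.single (i j : ι) : VEq (Pi.single i (1 : S)) (Pi.single j 1) := by
  refine (VEq.perm (Equiv.swap i j) _).trans ?_
  refine VEq.of_eq ?_
  ext k
  simp [Pi.single_apply, Equiv.swap_apply_eq_iff]

/-- Explicit patching lemma of Suslin. -/
lemma VEq.suslin [IsDomain T] (φ ψ : S →+* T) (c : T) (hc : c ≠ 0)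
    (hφψ : ∀ x, c ∣ φ x - ψ x) (v : Fin 2 ⊕ κ → S) (g0 g1 : S)
    (h1 : φ (g0 * v (.inl 0) + g1 * v (.inl 1)) = c)
    (h2 : ψ (g0 * v (.inl 0) + g1 * v (.inl 1)) = c) : VEq (φ ∘ v) (ψ ∘ v) := by
  set s := g0 * v (.inl 0) + g1 * v (.inl 1) with hs
  let M : Matrix (Fin 2 ⊕ κ) (Fin 2 ⊕ κ) S := Matrix.fromBlocks
    !![g0, g1; -v (.inl 1), v (.inl 0)] 0 (Matrix.of fun j => ![-v (.inr j) * g0, -v (.inr j) * g1])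
    (s • (1 : Matrix κ κ S))
  let M' : Matrix (Fin 2 ⊕ κ) (Fin 2 ⊕ κ) S := Matrix.fromBlocks
    !![v (.inl 0), -g1; v (.inl 1), g0] 0 (Matrix.of fun j => ![v (.inr j), 0])
    (1 : Matrix κ κ S)
  have hM'M : M' * M = s • (1 : Matrix (Fin 2 ⊕ κ) (Fin 2 ⊕ κ) S) := by
    rw [Matrix.fromBlocks_multiply, ← Matrix.fromBlocks_one, Matrix.fromBlocks_smul]
    congr 1
    · ext i j; fin_cases i <;> fin_cases j <;> simp [Matrix.mul_apply, hs] <;> ring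
    · simp
    · ext i j; fin_cases j <;> simp [Matrix.mul_apply]
    · simp
  have hMM' : M * M' = s • (1 : Matrix (Fin 2 ⊕ κ) (Fin 2 ⊕ κ) S) := by
    rw [Matrix.fromBlocks_multiply, ← Matrix.fromBlocks_one, Matrix.fromBlocks_smul]
    congr 1
    · ext i j; fin_cases i <;> fin_cases j <;> simp [Matrix.mul_apply, hs] <;> ring
    · simp
    · ext i j; fin_cases j <;> simp [Matrix.mul_apply, hs] <;> ring
    · simp
  have hMv : M.mulVec v = s • Pi.single (.inl 0) 1 := by
    ext (i | i)
    · fin_cases i <;> simp [M, Matrix.mulVec, dotProduct, hs] <;> ring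
    · simp [M, Matrix.mulVec, dotProduct, hs, Matrix.one_apply]; ring
  have hM'e : M'.mulVec (Pi.single (.inl 0) 1) = v := by
    ext (i | i)
    · fin_cases i <;> simp [M']
    · simp [M']
  have hmap : ∀ (χ : S →+* T), χ s = c → ∀ A B : Matrix (Fin 2 ⊕ κ) (Fin 2 ⊕ κ) S,
      A * B = s • 1 → A.map χ * B.map χ = c • 1 := by
    intro χ hχ A B h
    rw [← Matrix.map_mul, h]
    ext i j
    simp [Matrix.one_apply, apply_ite χ, hχ]
  have hdiv : ∀ (χ ξ : S →+* T), χ s = c → (∀ x, c ∣ ξ x - χ x) →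
      ∃ N : Matrix (Fin 2 ⊕ κ) (Fin 2 ⊕ κ) T, c • N = M'.map χ * M.map ξ := by
    intro χ ξ hχ hd
    choose D hD using hd
    refine ⟨1 + M'.map χ * M.map D, ?_⟩
    rw [smul_add, ← hmap χ hχ _ _ hM'M, ← Matrix.mul_smul, ← Matrix.mul_add]
    congr 1
    ext i j
    simp [← hD]
  obtain ⟨N, hN⟩ := hdiv ψ φ h2 hφψ
  obtain ⟨N', hN'⟩ := hdiv φ ψ h1 (fun x => by rw [dvd_sub_comm]; exact hφψ x)
  have hinj : ∀ A B : Matrix (Fin 2 ⊕ κ) (Fin 2 ⊕ κ) T, c • c • A = c • c • B → A = B := by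
    intro A B h
    ext i j
    have := congr_fun (congr_fun h i) j
    simpa [hc] using this
  refine ⟨N, N', hinj _ _ ?_, hinj _ _ ?_, ?_⟩
  · rw [← Matrix.mul_smul, ← Matrix.smul_mul, hN, hN', Matrix.mul_assoc,
      ← Matrix.mul_assoc (M.map ψ), hmap ψ h2 _ _ hMM', Matrix.smul_mul, Matrix.one_mul,
      Matrix.mul_smul, hmap φ h1 _ _ hM'M]
  · rw [← Matrix.mul_smul, ← Matrix.smul_mul, hN, hN', Matrix.mul_assoc,
      ← Matrix.mul_assoc (M.map φ), hmap φ h1 _ _ hMM', Matrix.smul_mul, Matrix.one_mul,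
      Matrix.mul_smul, hmap ψ h2 _ _ hM'M]
  · have h3 : c • N.mulVec (φ ∘ v) = c • (ψ ∘ v) := by
      rw [← Matrix.smul_mulVec, hN, ← Matrix.mulVec_mulVec]
      have e1 : (M.map φ).mulVec (φ ∘ v) = c • Pi.single (.inl 0) 1 := by
        ext i
        rw [← RingHom.map_mulVec, hMv]
        simp [Pi.single_apply, apply_ite φ, h1]
      rw [e1, Matrix.mulVec_smul]
      congr 1
      ext i
      conv_rhs => rw [← hM'e, Function.comp_apply, RingHom.map_mulVec]
      congr 2
      ext j
      simp [Pi.single_apply, apply_ite ψ]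
    ext i
    have := congr_fun h3 i
    simpa [hc] using this

end VEq

open Polynomial

/-- In a PID (here over a field), `(f,a,b)` unimodular with `f ≠ 0` can be shortened. -/
lemma exists_coprime_add {D : Type*} [CommRing D] [IsDomain D] [IsPrincipalIdealRing D]
    (f a b : D) (hf : f ≠ 0) (h : ∃ x y z, x * f + y * a + z * b = 1) :
    ∃ l, IsCoprime f (a + l * b) := by
  classical
  obtain ⟨x, y, z, h⟩ := h
  let s := (UniqueFactorizationMonoid.factors f).filter (fun p => ¬ p ∣ a)
  refine ⟨s.prod, ?_⟩
  refine isCoprime_of_prime_dvd (fun h => hf h.1) ?_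
  intro p hp hpf hpab
  by_cases hpa : p ∣ a
  · have h1 : p ∣ s.prod * b := (dvd_add_right hpa).1 hpab
    rcases hp.dvd_or_dvd h1 with h2 | h2
    · obtain ⟨q, hq, hpq⟩ := Prime.exists_mem_multiset_dvd hp h2
      have hq' := Multiset.mem_filter.1 hq
      have hqirr := UniqueFactorizationMonoid.irreducible_of_factor q hq'.1
      have : Associated p q := (hp.irreducible.dvd_irreducible_iff_associated hqirr).1 hpq
      exact hq'.2 (this.symm.dvd.trans hpa)
    · apply hp.not_isUnit
      rw [isUnit_iff_dvd_one, ← h]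
      exact dvd_add (dvd_add (hpf.mul_left _) (hpa.mul_left _)) (h2.mul_left _)
  · obtain ⟨q, hq, hpq⟩ := UniqueFactorizationMonoid.exists_mem_factors_of_dvd hf hp.irreducible hpf
    have : q ∈ s := Multiset.mem_filter.2 ⟨hq, fun h => hpa (hpq.dvd.trans h)⟩
    have h2 : p ∣ s.prod := hpq.dvd.trans (Multiset.dvd_prod this)
    exact hpa ((dvd_add_left (h2.mul_right b)).1 hpab)

lemma exists_coprime_sum {D κ : Type*} [CommRing D] [IsDomain D] [IsPrincipalIdealRing D]
    [Fintype κ]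
    (f a : D) (b : κ → D) (hf : f ≠ 0) (h : ∃ x y, ∃ z : κ → D, x * f + y * a + ∑ j, z j * b j = 1) :
    ∃ l : κ → D, IsCoprime f (a + ∑ j, l j * b j) := by
  obtain ⟨x, y, z, h⟩ := h
  obtain ⟨l, hl⟩ := exists_coprime_add f a (∑ j, z j * b j) hf ⟨x, y, 1, by rw [one_mul, h]⟩
  refine ⟨fun j => l * z j, ?_⟩
  simpa [Finset.mul_sum, mul_assoc] using hl

/-- Nakayama step. -/
lemma exists_const_mem {A : Type*} [CommRing A] (m : Ideal A) (f g : A[X]) (hf : f.Monic)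
    (h : IsCoprime (f.map (Ideal.Quotient.mk m)) (g.map (Ideal.Quotient.mk m))) :
    ∃ c : A, c - 1 ∈ m ∧ Polynomial.C c ∈ Ideal.span {f, g} := by
  let I : Ideal A[X] := Ideal.span {f, g}
  have hle : Ideal.span {f} ≤ I := Ideal.span_mono (by simp)
  have : Module.Finite A (A[X] ⧸ Ideal.span {f}) := hf.finite_quotient
  have : Module.Finite A (A[X] ⧸ I) :=
    Module.Finite.of_surjective (Ideal.Quotient.factorₐ A hle).toLinearMap
      (Ideal.Quotient.factor_surjective hle)
  have hm : (⊤ : Submodule A (A[X] ⧸ I)) ≤ m • ⊤ := by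
    obtain ⟨a, b, hab⟩ := h
    obtain ⟨a, rfl⟩ := Polynomial.map_surjective _ Ideal.Quotient.mk_surjective a
    obtain ⟨b, rfl⟩ := Polynomial.map_surjective _ Ideal.Quotient.mk_surjective b
    have hmem : (a * f + b * g - 1) ∈ Ideal.map Polynomial.C m := by
      rw [← Ideal.mk_ker (I := m), ← Polynomial.ker_mapRingHom, RingHom.mem_ker]
      simp [hab]
    have hmul : ∀ q ∈ Ideal.map (Polynomial.C : A →+* A[X]) m, Ideal.Quotient.mk I q ∈ m • (⊤ : Submodule A (A[X] ⧸ I)) := by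
      intro q hq
      refine Submodule.span_induction (p := fun q _ => Ideal.Quotient.mk I q ∈ m • (⊤ : Submodule A (A[X] ⧸ I))) ?_ ?_ ?_ ?_ hq
      · rintro _ ⟨x, hx, rfl⟩
        have : Ideal.Quotient.mk I (Polynomial.C x) = x • (1 : A[X] ⧸ I) := by
          have h5 : x • (1 : A[X] ⧸ I) = Ideal.Quotient.mk I (x • 1) := rfl
          rw [h5, Algebra.smul_def, mul_one]; rfl
        rw [this]
        exact Submodule.smul_mem_smul hx trivial
      · simp
      · intro x y _ _ hx hy; rw [map_add]; exact add_mem hx hy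
      · intro p x _ hx
        rw [smul_eq_mul, map_mul]
        have := Submodule.mem_map_of_mem (f := LinearMap.mulLeft A (Ideal.Quotient.mk I p)) hx
        rw [Submodule.map_smul''] at this
        exact Submodule.smul_mono le_rfl le_top this
    intro q _
    obtain ⟨q, rfl⟩ := Ideal.Quotient.mk_surjective q
    have : Ideal.Quotient.mk I q = Ideal.Quotient.mk I (-(q * (a * f + b * g - 1))) := by
      rw [Ideal.Quotient.eq]
      have : q - -(q * (a * f + b * g - 1)) = (q * a) * f + (q * b) * g := by ring
      rw [this]
      exact Ideal.mem_span_pair.2 ⟨_, _, rfl⟩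
    rw [this]
    exact hmul _ (neg_mem (Ideal.mul_mem_left _ _ hmem))
  obtain ⟨r, hr1, hr2⟩ := Submodule.exists_sub_one_mem_and_smul_eq_zero_of_fg_of_le_smul m ⊤
    Module.Finite.fg_top hm
  refine ⟨r, hr1, ?_⟩
  have := hr2 1 trivial
  have h5 : r • (1 : A[X] ⧸ I) = Ideal.Quotient.mk I (r • 1) := rfl
  rw [h5, Algebra.smul_def, mul_one] at this
  exact Ideal.Quotient.eq_zero_iff_mem.1 this

lemma exists_shear {S κ : Type*} [CommRing S] [Fintype κ] [DecidableEq κ]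
    (v : Fin 2 ⊕ κ → S) (l' : κ → S) :
    ∃ v' : Fin 2 ⊕ κ → S, VEq v v' ∧ v' (.inl 0) = v (.inl 0) ∧
      v' (.inl 1) = v (.inl 1) + ∑ j, l' j * v (.inr j) := by
  have e : ∑ j, (Sum.elim 0 l' : Fin 2 ⊕ κ → S) j * v j = ∑ j, l' j * v (.inr j) := by
    simp [Fintype.sum_sum_type]
  refine ⟨_, VEq.add' (.inl 1) (Sum.elim 0 l') (by simp) v, ?_, ?_⟩
  · simp
  · rw [e]; simp

lemma exists_lift_coprime_field {A k κ : Type*} [CommRing A] [Field k] [Fintype κ] (π : A →+* k)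
    (hs : Function.Surjective π)
    (v : Fin 2 ⊕ κ → A[X]) (hv : (v (.inl 0)).Monic)
    (hu : ∃ w : Fin 2 ⊕ κ → A[X], ∑ i, w i * v i = 1) :
    ∃ l' : κ → A[X], IsCoprime ((v (.inl 0)).map π)
      ((v (.inl 1) + ∑ j, l' j * v (.inr j)).map π) := by
  obtain ⟨w, hw⟩ := hu
  have hw' := congr_arg (Polynomial.map π) hw
  rw [Fintype.sum_sum_type, Fin.sum_univ_two] at hw'
  simp only [Polynomial.map_add, Polynomial.map_sum, Polynomial.map_mul, Polynomial.map_one] at hw'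
  obtain ⟨l, hl⟩ := exists_coprime_sum ((v (.inl 0)).map π) ((v (.inl 1)).map π)
    (fun j => (v (.inr j)).map π) (hv.map π).ne_zero
    ⟨(w (.inl 0)).map π, (w (.inl 1)).map π, fun j => (w (.inr j)).map π, hw'⟩
  choose l' hl' using fun j => Polynomial.map_surjective π hs (l j)
  refine ⟨l', ?_⟩
  simp only [Polynomial.map_add, Polynomial.map_sum, Polynomial.map_mul, hl']
  exact hl

lemma exists_lift_coprime {A κ : Type*} [CommRing A] [Fintype κ] (m : Ideal A) [hm : m.IsMaximal]
    (v : Fin 2 ⊕ κ → A[X]) (hv : (v (.inl 0)).Monic)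
    (hu : ∃ w : Fin 2 ⊕ κ → A[X], ∑ i, w i * v i = 1) :
    ∃ l' : κ → A[X], IsCoprime ((v (.inl 0)).map (Ideal.Quotient.mk m))
      ((v (.inl 1) + ∑ j, l' j * v (.inr j)).map (Ideal.Quotient.mk m)) := by
  exact @exists_lift_coprime_field A (A ⧸ m) κ _ (Ideal.Quotient.field m) _ (Ideal.Quotient.mk m)
    Ideal.Quotient.mk_surjective v hv hu

/-- Theorem of Suslin -/
theorem suslin_monic {A κ : Type*} [CommRing A] [IsDomain A] [Fintype κ] [DecidableEq κ]
    (v : Fin 2 ⊕ κ → A[X]) (hv : (v (.inl 0)).Monic) (hu : ∃ w : Fin 2 ⊕ κ → A[X], ∑ i, w i * v i = 1) :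
    VEq v (fun i => Polynomial.C ((v i).eval 0)) := by
  let I : Ideal A :=
    { carrier := {c | ∀ b b' : A[X], Polynomial.C c ∣ b - b' →
        VEq (compRingHom b ∘ v) (compRingHom b' ∘ v)}
      add_mem' := by
        intro c d hc hd b b' ⟨x, hx⟩
        refine (hc b (b - Polynomial.C c * x) (by simp)).trans (hd _ b' ⟨x, ?_⟩)
        rw [sub_right_comm, hx, Polynomial.C_add]; ring
      zero_mem' := by
        intro b b' h
        rw [Polynomial.C_0, zero_dvd_iff, sub_eq_zero] at h
        rw [h]; exact VEq.refl _
      smul_mem' := by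
        intro a c hc b b' h
        refine hc b b' (dvd_trans ?_ h)
        rw [smul_eq_mul, Polynomial.C_mul]; exact dvd_mul_left _ _ }
  suffices hI : I = ⊤ by
    have h1 : (1 : A) ∈ I := hI ▸ trivial
    have := h1 Polynomial.X 0 (by simp)
    refine (VEq.of_eq ?_).trans (this.trans (VEq.of_eq ?_))
    · ext i; simp
    · ext i; simp
  by_contra hI
  obtain ⟨m, hm, hIm⟩ := Ideal.exists_le_maximal I hI
  obtain ⟨l', hl'⟩ := exists_lift_coprime m v hv hu
  obtain ⟨v', hvv', h0, h1⟩ := exists_shear v l'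
  obtain ⟨c, hc1, hc2⟩ := exists_const_mem m (v' (.inl 0)) (v' (.inl 1)) (h0 ▸ hv) (by
    rw [h0, h1]; exact hl')
  have hcm : c ∉ m := fun h => hm.ne_top ((Ideal.eq_top_iff_one m).2 (by
    simpa using m.sub_mem h hc1))
  apply hcm
  apply hIm
  intro b b' hbb
  have hc0 : c ≠ 0 := fun h => hcm (h ▸ m.zero_mem)
  obtain ⟨g0, g1, hg⟩ := Ideal.mem_span_pair.1 hc2
  refine (hvv'.map (compRingHom b)).trans (VEq.trans ?_ (hvv'.map (compRingHom b')).symm)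
  refine VEq.suslin _ _ (Polynomial.C c) (by simpa using hc0) ?_ v' g0 g1 (by rw [hg]; simp) (by rw [hg]; simp)
  intro x
  refine hbb.trans ?_
  simp only [coe_compRingHom]
  rw [Polynomial.comp, Polynomial.comp, Polynomial.eval₂_eq_eval_map, Polynomial.eval₂_eq_eval_map]
  exact sub_dvd_eval_sub _ _ _


namespace NNorm
open Polynomial MvPolynomial Ideal Nat RingHom List NoetherNormalization

variable {k : Type*} [Field k] {n : ℕ} (f : MvPolynomial (Fin (n + 1)) k)
variable (v w : Fin (n + 1) →₀ ℕ)

variable {f v} in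
lemma lt_up (vlt : ∀ i, v i < (2 + f.totalDegree)) : ∀ l ∈ ofFn v, l < (2 + f.totalDegree) := by
  grind

lemma t1_comp_t1_neg (c : k) : (T1 f c).comp (T1 f (-c)) = AlgHom.id _ _ := by
  rw [comp_aeval, ← MvPolynomial.aeval_X_left]
  ext i v
  cases i using Fin.cases <;> simp

/-- the change of variables of Nagata -/
noncomputable abbrev T := AlgEquiv.ofAlgHom (T1 f 1) (T1 f (-1))
  (t1_comp_t1_neg f 1) (by simpa using t1_comp_t1_neg f (-1))

lemma sum_r_mul_ne (vlt : ∀ i, v i < (2 + f.totalDegree)) (wlt : ∀ i, w i < (2 + f.totalDegree)) (ne : v ≠ w) :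
    ∑ x : Fin (n + 1), (2 + f.totalDegree) ^ x.1 * v x ≠ ∑ x : Fin (n + 1), (2 + f.totalDegree) ^ x.1 * w x := by
  intro h
  refine ne <| Finsupp.ext <| congrFun <| ofFn_inj.mp ?_
  apply ofDigits_inj_of_len_eq (Nat.lt_add_right f.totalDegree one_lt_two)
    (by simp) (lt_up vlt) (lt_up wlt)
  simpa only [ofDigits_eq_sum_mapIdx, mapIdx_eq_ofFn, get_ofFn, length_ofFn,
    Fin.val_cast, mul_comm, sum_ofFn] using! h

lemma degreeOf_zero_t {a : k} (ha : a ≠ 0) : ((T f) (monomial v a)).degreeOf 0 =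
    ∑ i : Fin (n + 1), ((2 + f.totalDegree) ^ i.1) * v i := by
  rw [← natDegree_finSuccEquiv, monomial_eq, Finsupp.prod_pow v fun a ↦ X a]
  simp only [Fin.prod_univ_succ, Fin.sum_univ_succ, map_mul, map_prod, map_pow,
    AlgEquiv.ofAlgHom_apply, MvPolynomial.aeval_C, MvPolynomial.aeval_X, if_pos, Fin.succ_ne_zero,
    ite_false, one_smul, map_add, finSuccEquiv_X_zero, finSuccEquiv_X_succ, algebraMap_eq]
  have h (i : Fin n) :
      (Polynomial.C (X (R := k) i) + Polynomial.X ^ ((2 + f.totalDegree) ^ i.succ.1)) ^ v i.succ ≠ 0 :=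
    pow_ne_zero (v i.succ) (leadingCoeff_ne_zero.mp <| by simp [add_comm, leadingCoeff_X_pow_add_C])
  rw [natDegree_mul (by simp [ha]) (mul_ne_zero (by simp) (Finset.prod_ne_zero_iff.mpr
    (fun i _ ↦ h i))), natDegree_mul (by simp) (Finset.prod_ne_zero_iff.mpr (fun i _ ↦ h i)),
    natDegree_prod _ _ (fun i _ ↦ h i), natDegree_finSuccEquiv, degreeOf_C]
  simpa only [natDegree_pow, zero_add, natDegree_X, mul_one, Fin.val_zero, pow_zero, one_mul,
    add_right_inj] using Finset.sum_congr rfl (fun i _ ↦ by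
    rw [add_comm (Polynomial.C _), natDegree_X_pow_add_C, mul_comm])

lemma degreeOf_t_ne_of_ne (hv : v ∈ f.support) (hw : w ∈ f.support) (ne : v ≠ w) :
    (T f <| monomial v <| coeff v f).degreeOf 0 ≠
    (T f <| monomial w <| coeff w f).degreeOf 0 := by
  rw [degreeOf_zero_t _ _ <| mem_support_iff.mp hv, degreeOf_zero_t _ _ <| mem_support_iff.mp hw]
  refine sum_r_mul_ne f v w (fun i ↦ ?_) (fun i ↦ ?_) ne <;>
  exact lt_of_le_of_lt ((monomial_le_degreeOf i ‹_›).trans (degreeOf_le_totalDegree f i))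
    (by lia)

lemma leadingCoeff_finSuccEquiv_t :
    (finSuccEquiv k n ((T f) ((monomial v) (coeff v f)))).leadingCoeff =
    algebraMap k _ (coeff v f) := by
  rw [monomial_eq, Finsupp.prod_fintype]
  · simp only [map_mul, map_prod, leadingCoeff_mul, leadingCoeff_prod]
    rw [AlgEquiv.ofAlgHom_apply, algHom_C, algebraMap_eq, finSuccEquiv_apply,
      eval₂Hom_C, coe_comp]
    simp only [AlgEquiv.ofAlgHom_apply, Function.comp_apply, leadingCoeff_C, map_pow,
      leadingCoeff_pow, algebraMap_eq]
    have : ∀ j, ((finSuccEquiv k n) ((T1 f) 1 (X j))).leadingCoeff = 1 := fun j ↦ by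
      by_cases h : j = 0
      · simp [h, finSuccEquiv_apply]
      · simp only [aeval_eq_bind₁, bind₁_X_right, if_neg h, one_smul, map_add, map_pow]
        obtain ⟨i, rfl⟩ := Fin.exists_succ_eq.mpr h
        simp [finSuccEquiv_X_succ, finSuccEquiv_X_zero, add_comm]
    simp only [this, one_pow, Finset.prod_const_one, mul_one]
  exact fun i ↦ pow_zero _

lemma T_leadingcoeff_isUnit (fne : f ≠ 0) :
    IsUnit (finSuccEquiv k n (T f f)).leadingCoeff := by
  obtain ⟨v, vin, vs⟩ := Finset.exists_max_image f.support
    (fun v ↦ (T f ((monomial v) (coeff v f))).degreeOf 0) (support_nonempty.mpr fne)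
  set h := fun w ↦ (MvPolynomial.monomial w) (coeff w f)
  simp only [← natDegree_finSuccEquiv] at vs
  replace vs : ∀ x ∈ f.support \ {v}, (finSuccEquiv k n ((T f) (h x))).degree <
      (finSuccEquiv k n ((T f) (h v))).degree := by
    intro x hx
    obtain ⟨h1, h2⟩ := Finset.mem_sdiff.mp hx
    apply degree_lt_degree <| lt_of_le_of_ne (vs x h1) ?_
    simpa only [natDegree_finSuccEquiv]
      using degreeOf_t_ne_of_ne f _ _ h1 vin <| ne_of_not_mem_cons h2
  have coeff : (finSuccEquiv k n ((T f) (h v + ∑ x ∈ f.support \ {v}, h x))).leadingCoeff =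
      (finSuccEquiv k n ((T f) (h v))).leadingCoeff := by
    simp only [map_add, map_sum]
    rw [add_comm]
    apply leadingCoeff_add_of_degree_lt <| (lt_of_le_of_lt <| degree_sum_le _ _) ?_
    have h2 : h v ≠ 0 := by simpa [h] using mem_support_iff.mp vin
    replace h2 : (finSuccEquiv k n ((T f) (h v))) ≠ 0 := fun eq ↦ h2 <|
      by simpa only [map_eq_zero_iff _ (AlgEquiv.injective _)] using eq
    exact (Finset.sup_lt_iff <| Ne.bot_lt (fun x ↦ h2 <| degree_eq_bot.mp x)).mpr vs
  nth_rw 2 [← f.support_sum_monomial_coeff]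
  rw [Finset.sum_eq_add_sum_sdiff_singleton_of_mem vin h]
  rw [leadingCoeff_finSuccEquiv_t] at coeff
  simpa only [coeff, algebraMap_eq] using (mem_support_iff.mp vin).isUnit.map MvPolynomial.C

theorem exists_monic (fne : f ≠ 0) :
    ∃ (e : MvPolynomial (Fin (n + 1)) k ≃+* (MvPolynomial (Fin n) k)[X])
      (c : ((MvPolynomial (Fin n) k)[X])ˣ), (c * e f).Monic := by
  obtain ⟨u, hu⟩ := T_leadingcoeff_isUnit f fne
  refine ⟨((T f).trans (finSuccEquiv k n)).toRingEquiv, Units.map Polynomial.C.toMonoidHom u⁻¹, ?_⟩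
  have : (((finSuccEquiv k n) ((T f) f)).leadingCoeff * ((u⁻¹ : (MvPolynomial (Fin n) k)ˣ) : MvPolynomial (Fin n) k)) = 1 := by
    rw [← hu]; simp
  have h2 := monic_mul_C_of_leadingCoeff_mul_eq_one this
  rw [mul_comm]
  exact h2

end NNorm

/-- unimodular vectors are completable -/
def Herm (S : Type*) [CommRing S] : Prop :=
  ∀ (ι : Type) [Fintype ι] [DecidableEq ι] (v : ι → S) (i0 : ι),
    (∃ w : ι → S, ∑ i, w i * v i = 1) → VEq v (Pi.single i0 1)

lemma VEq.unimodular {ι S : Type*} [Fintype ι] [DecidableEq ι] [CommRing S] {v v' : ι → S}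
    (h : VEq v v') (hv : ∃ w : ι → S, ∑ i, w i * v i = 1) : ∃ w : ι → S, ∑ i, w i * v' i = 1 := by
  obtain ⟨M, N, h1, h2, rfl⟩ := h
  obtain ⟨w, hw⟩ := hv
  refine ⟨Matrix.vecMul w N, ?_⟩
  change dotProduct _ _ = _
  rw [← Matrix.dotProduct_mulVec, Matrix.mulVec_mulVec, h1, Matrix.one_mulVec]
  exact hw

lemma unimodular_map {ι S T : Type*} [Fintype ι] [CommRing S] [CommRing T] {v : ι → S}
    (φ : S →+* T)
    (hv : ∃ w : ι → S, ∑ i, w i * v i = 1) : ∃ w : ι → T, ∑ i, w i * (φ ∘ v) i = 1 := by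
  obtain ⟨w, hw⟩ := hv
  refine ⟨φ ∘ w, ?_⟩
  simpa using congr_arg φ hw

lemma unimodular_reindex {ι κ S : Type*} [Fintype ι] [Fintype κ] [CommRing S] {v : ι → S}
    (e : κ ≃ ι)
    (hv : ∃ w : ι → S, ∑ i, w i * v i = 1) : ∃ w : κ → S, ∑ i, w i * (v ∘ e) i = 1 := by
  obtain ⟨w, hw⟩ := hv
  refine ⟨w ∘ e, ?_⟩
  rw [← hw]
  exact Equiv.sum_comp e (fun i => w i * v i)

lemma herm_step {A : Type*} [CommRing A] [IsDomain A] (ih : Herm A) {κ : Type} [Fintype κ]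
    [DecidableEq κ] (v' : Fin 2 ⊕ κ → Polynomial A) (hmon : (v' (.inl 0)).Monic)
    (h3 : ∃ w : Fin 2 ⊕ κ → Polynomial A, ∑ i, w i * v' i = 1) :
    VEq v' (Pi.single (.inl 0) 1) := by
  refine (suslin_monic v' hmon h3).trans ?_
  have h4 := unimodular_map (Polynomial.evalRingHom 0) h3
  have h5 := (ih (Fin 2 ⊕ κ) (Polynomial.evalRingHom 0 ∘ v') (.inl 0) h4).map Polynomial.C
  refine (VEq.of_eq ?_).trans (h5.trans (VEq.of_eq ?_))
  · ext1 j; simp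
  · ext1 j
    rcases j with j | j <;> simp [Pi.single_apply, apply_ite Polynomial.C]

lemma herm_step' {A : Type*} [CommRing A] [IsDomain A] (ih : Herm A) {κ : Type} [Fintype κ]
    [DecidableEq κ] (v' : Fin 2 ⊕ κ → Polynomial A) (c : (Polynomial A)ˣ)
    (hmon : ((c : Polynomial A) * v' (.inl 0)).Monic)
    (h3 : ∃ w : Fin 2 ⊕ κ → Polynomial A, ∑ i, w i * v' i = 1) :
    VEq v' (Pi.single (.inl 0) 1) := by
  have h2 := VEq.smul_unit (.inl 0) c v'
  exact h2.trans (herm_step ih _ (by simpa using hmon) (h2.unimodular h3))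

lemma exists_sum_equiv {ι : Type} [Fintype ι] [DecidableEq ι] (i i2 : ι) (hi2 : i2 ≠ i) :
    ∃ (κ : Type) (_ : Fintype κ) (_ : DecidableEq κ) (e : Fin 2 ⊕ κ ≃ ι), e (.inl 0) = i := by
  let κ := {x : ι // x ≠ i ∧ x ≠ i2}
  have hbij : Function.Bijective (Sum.elim ![i, i2] (Subtype.val : κ → ι)) := by
    constructor
    · rintro (a | ⟨a, ha⟩) (b | ⟨b, hb⟩) hab
      · fin_cases a <;> fin_cases b <;> simp_all
      · exfalso
        fin_cases a
        · exact hb.1 (by simpa using hab.symm)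
        · exact hb.2 (by simpa using hab.symm)
      · exfalso
        fin_cases b
        · exact ha.1 (by simpa using hab)
        · exact ha.2 (by simpa using hab)
      · simp_all
    · intro j
      by_cases h1 : j = i
      · exact ⟨.inl 0, by simp [h1]⟩
      by_cases h2 : j = i2
      · exact ⟨.inl 1, by simp [h2]⟩
      · exact ⟨.inr ⟨j, h1, h2⟩, by simp⟩
  let e : Fin 2 ⊕ κ ≃ ι := Equiv.ofBijective _ hbij
  exact ⟨κ, inferInstance, inferInstance, e, rfl⟩


theorem herm_mvPolynomial (K : Type*) [Field K] (n : ℕ) : Herm (MvPolynomial (Fin n) K) := by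
  induction n with
  | zero =>
    intro ι _ _ v i0 h
    have : ∃ i, v i ≠ 0 := by
      by_contra! hc
      obtain ⟨w, hw⟩ := h
      simp [hc] at hw
    obtain ⟨i, hi⟩ := this
    refine (VEq.of_isUnit i v ?_).trans (VEq.single i i0)
    have h2 : IsUnit (MvPolynomial.isEmptyRingEquiv K (Fin 0) (v i)) := by
      rw [isUnit_iff_ne_zero]; exact (map_ne_zero_iff _ (RingEquiv.injective _)).2 hi
    exact (MulEquiv.isUnit_map _).1 h2
  | succ n ih =>
    intro ι _ _ v i0 h
    have : ∃ i, v i ≠ 0 := by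
      by_contra! hc
      obtain ⟨w, hw⟩ := h
      simp [hc] at hw
    obtain ⟨i, hi⟩ := this
    refine VEq.trans ?_ (VEq.single i i0)
    by_cases hs : ∀ j, j = i
    · apply VEq.of_isUnit
      obtain ⟨w, hw⟩ := h
      have : ∑ j, w j * v j = w i * v i := by
        have : (Finset.univ : Finset ι) = {i} := by ext j; simp [hs j]
        rw [this]; simp
      exact IsUnit.of_mul_eq_one (w i) (by rw [mul_comm, ← this, hw])
    push Not at hs
    obtain ⟨i2, hi2⟩ := hs
    obtain ⟨κ, _, _, e, he0⟩ := exists_sum_equiv i i2 hi2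
    refine VEq.reindex e ?_
    obtain ⟨E, c, hc⟩ := NNorm.exists_monic (v i) hi
    suffices hmain : VEq ((E : _ →+* Polynomial (MvPolynomial (Fin n) K)) ∘ (v ∘ e)) (Pi.single (.inl 0) 1) by
      have := hmain.map (E.symm : Polynomial (MvPolynomial (Fin n) K) →+* MvPolynomial (Fin (n + 1)) K)
      refine (VEq.of_eq ?_).trans (this.trans (VEq.of_eq ?_))
      · ext1 j; simp
      · ext1 j
        have : e j = i ↔ j = .inl 0 := by rw [← he0]; exact e.injective.eq_iff
        by_cases hj : j = .inl 0
        · subst hj; simp [he0]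
        · rw [Function.comp_apply, Function.comp_apply, Pi.single_eq_of_ne hj,
            Pi.single_eq_of_ne (fun h => hj (this.1 h))]; simp
    refine herm_step' ih _ c ?_ (unimodular_map _ (unimodular_reindex e h))
    have : ((E : _ →+* Polynomial (MvPolynomial (Fin n) K)) ∘ (v ∘ e)) (.inl 0) = E (v i) := by
      rw [← he0]; rfl
    rw [this]; exact hc


universe u

lemma herm_cancel_one {R : Type u} [CommRing R] [Nontrivial R] (hH : Herm R) {Q : Type u}
    [AddCommGroup Q] [Module R Q] {k : ℕ} (e : (Q × R) ≃ₗ[R] (Fin k → R)) : Module.Free R Q := by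
  have huni : ∃ w : Fin k → R, ∑ i, w i * e (0, 1) i = 1 := by
    refine ⟨fun i => (e.symm (Pi.single i 1)).2, ?_⟩
    have h1 : e.symm (e (0, 1)) = ∑ i, e (0, 1) i • e.symm (Pi.single i 1) := by
      conv_lhs => rw [pi_eq_sum_univ' (e (0, 1))]
      simp only [map_sum, map_smul]
    have h2 := congr_arg Prod.snd h1
    rw [LinearEquiv.symm_apply_apply, Prod.snd_sum] at h2
    refine Eq.trans ?_ h2.symm
    exact Finset.sum_congr rfl fun i _ => by simp [mul_comm]
  cases k with
  | zero =>
    obtain ⟨w, hw⟩ := huni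
    simp at hw
  | succ k =>
    obtain ⟨M, N, h1, h2, h3⟩ := hH (Fin (k + 1)) (e (0, 1)) 0 huni
    let μ : (Fin (k + 1) → R) ≃ₗ[R] (Fin (k + 1) → R) :=
      (LinearEquiv.ofLinear (Matrix.mulVecLin M) (Matrix.mulVecLin N)
        (by rw [← Matrix.mulVecLin_mul, h2, Matrix.mulVecLin_one])
        (by rw [← Matrix.mulVecLin_mul, h1, Matrix.mulVecLin_one]))
    let ψ : (Q × R) ≃ₗ[R] (Fin (k + 1) → R) := e.trans μ
    have hψ : ψ (0, 1) = Pi.single 0 1 := h3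
    have hψa : ∀ a, ψ (0, a) = Pi.single 0 a := by
      intro a
      have : ((0, a) : Q × R) = a • (0, 1) := by simp
      rw [this, map_smul, hψ, ← Pi.single_smul]; simp
    let τ : Q →ₗ[R] (Fin k → R) :=
      (LinearMap.funLeft R R Fin.succ) ∘ₗ ψ.toLinearMap ∘ₗ LinearMap.inl R Q R
    have hτ : ∀ q i, τ q i = ψ (q, 0) i.succ := fun q i => rfl
    have hbij : Function.Bijective τ := by
      constructor
      · rw [injective_iff_map_eq_zero]
        intro q hq
        have : ψ (q, 0) = ψ (0, ψ (q, 0) 0) := by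
          rw [hψa]
          ext i
          refine Fin.cases ?_ (fun i => ?_) i
          · simp
          · rw [← hτ, hq]; simp
        exact congr_arg Prod.fst (ψ.injective this)
      · intro t
        obtain ⟨⟨q, a⟩, hq⟩ := ψ.surjective (Fin.cons 0 t)
        refine ⟨q, ?_⟩
        ext i
        rw [hτ]
        have : ((q, 0) : Q × R) = (q, a) - (0, a) := by simp
        rw [this, map_sub, hq, hψa]
        simp
    exact Module.Free.of_equiv (LinearEquiv.ofBijective τ hbij).symm

lemma herm_cancel {R : Type u} [CommRing R] [Nontrivial R] (hH : Herm R) (s : ℕ) :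
    ∀ {Q : Type u} [AddCommGroup Q] [Module R Q] [Module.Finite R Q]
      (_ : Module.Free R (Q × (Fin s → R))), Module.Free R Q := by
  induction s with
  | zero =>
    intro Q _ _ _ h
    exact Module.Free.of_equiv (LinearEquiv.prodUnique : (Q × (Fin 0 → R)) ≃ₗ[R] Q)
  | succ s ih =>
    intro Q _ _ _ h
    have e : (Q × (Fin (s + 1) → R)) ≃ₗ[R] ((Q × R) × (Fin s → R)) :=
      (LinearEquiv.prodCongr (LinearEquiv.refl R Q) (Fin.consLinearEquiv R (fun _ => R)).symm).trans
        (LinearEquiv.prodAssoc R Q R (Fin s → R)).symm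
    have : Module.Free R (Q × R) := ih (Module.Free.of_equiv e)
    exact herm_cancel_one hH (Module.finBasis R (Q × R)).equivFun

/-- A module with a surjection from a finite free module with finite free kernel. -/
lemma free_of_resolution {R : Type u} [CommRing R] [Nontrivial R] (hH : Herm R) {P N : Type u}
    [AddCommGroup P] [Module R P] [Module.Projective R P] [AddCommGroup N] [Module R N]
    [Module.Free R N] [Module.Finite R N] (f : N →ₗ[R] P) (hf : Function.Surjective f)
    [Module.Free R (LinearMap.ker f)] [Module.Finite R (LinearMap.ker f)] : Module.Free R P := by
  obtain ⟨g, hg⟩ := Module.projective_lifting_property f LinearMap.id hf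
  have : Module.Finite R P := Module.Finite.of_surjective f hf
  have hfg : ∀ p, f (g p) = p := fun p => LinearMap.congr_fun hg p
  let b := Module.finBasis R (LinearMap.ker f)
  let φ : (P × LinearMap.ker f) →ₗ[R] N := g.coprod (LinearMap.ker f).subtype
  have hbij : Function.Bijective φ := by
    constructor
    · rw [injective_iff_map_eq_zero]
      rintro ⟨p, x, hx⟩ h
      have h' : g p + x = 0 := h
      have h1 : p = 0 := by
        have := congr_arg f h'
        rw [map_add, hfg, LinearMap.mem_ker.1 hx] at this
        simpa using this
      subst h1
      simp at h'
      simp [h']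
    · intro y
      refine ⟨(f y, ⟨y - g (f y), by simp [hfg]⟩), ?_⟩
      change g (f y) + (y - g (f y)) = y
      abel
  have e1 := (LinearEquiv.ofBijective φ hbij).symm.trans
    (LinearEquiv.prodCongr (LinearEquiv.refl R P) b.equivFun)
  exact herm_cancel hH _ (Module.Free.of_equiv e1)



section KeyLemma
open Polynomial

/-- All f.g. projective modules (in the same universe) are free. -/
def ProjFree (R : Type u) [CommRing R] : Prop :=
  ∀ (P : Type u) [AddCommGroup P] [Module R P] [Module.Finite R P] [Module.Projective R P],
    Module.Free R P

variable {A : Type u} [CommRing A]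

lemma projective_restrict {P : Type u} [AddCommGroup P] [Module A P] [Module A[X] P]
    [IsScalarTower A A[X] P] [Module.Projective A[X] P] : Module.Projective A P := by
  obtain ⟨s, hs⟩ := Module.projective_def'.1 (inferInstance : Module.Projective A[X] P)
  have : Module.Projective A (P →₀ A[X]) := inferInstance
  refine Module.Projective.of_split (s.restrictScalars A)
    ((Finsupp.linearCombination A[X] id).restrictScalars A) ?_
  ext p
  exact LinearMap.congr_fun hs p

/-- Division by a monic polynomial as a linear map. -/
noncomputable def divMonicHom (g : A[X]) (hg : g.Monic) : A[X] →ₗ[A] A[X] where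
  toFun f := f /ₘ g
  map_add' x y := by
    nontriviality A
    refine (div_modByMonic_unique (x /ₘ g + y /ₘ g) (x %ₘ g + y %ₘ g) hg ⟨?_, ?_⟩).1
    · have h1 := modByMonic_add_div x g
      have h2 := modByMonic_add_div y g
      linear_combination h1 + h2
    · exact (degree_add_le _ _).trans_lt
        (max_lt (degree_modByMonic_lt _ hg) (degree_modByMonic_lt _ hg))
  map_smul' a x := by
    nontriviality A
    refine (div_modByMonic_unique (a • (x /ₘ g)) (a • (x %ₘ g)) hg ⟨?_, ?_⟩).1
    · have h1 := modByMonic_add_div x g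
      rw [mul_smul_comm, ← smul_add, h1]
    · exact (degree_smul_le _ _).trans_lt (degree_modByMonic_lt _ hg)

lemma finite_of_monic_torsion {M : Type u} [AddCommGroup M] [Module A M] [Module A[X] M]
    [IsScalarTower A A[X] M] [Module.Finite A[X] M] (g : A[X]) (hg : g.Monic)
    (h : ∀ x : M, g • x = 0) : Module.Finite A M := by
  have ht : Module.IsTorsionBySet A[X] M (Ideal.span {g} : Ideal A[X]) := by
    rintro x ⟨a, ha⟩
    obtain ⟨b, rfl⟩ := Ideal.mem_span_singleton'.1 ha
    change (b * g) • x = 0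
    rw [mul_smul, h, smul_zero]
  letI := ht.module
  have i1 : IsScalarTower A (A[X] ⧸ Ideal.span {g}) M := ht.isScalarTower
  have i2 : IsScalarTower A[X] (A[X] ⧸ Ideal.span {g}) M := ht.isScalarTower
  have i3 : Module.Finite A (A[X] ⧸ Ideal.span {g}) := hg.finite_quotient
  have i4 : Module.Finite (A[X] ⧸ Ideal.span {g}) M :=
    Module.Finite.of_restrictScalars_finite A[X] _ M
  exact Module.Finite.trans (A[X] ⧸ Ideal.span {g}) M

/-- The characteristic resolution of an `A[X]`-module which is finite free over `A`. -/
lemma charres [IsDomain A] {M : Type u} [AddCommGroup M] [Module A M] [Module A[X] M]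
    [IsScalarTower A A[X] M] {s : ℕ} (b : Module.Basis (Fin s) A M) :
    Module.Free A[X] (LinearMap.ker (Fintype.linearCombination A[X] b)) ∧
    Module.Finite A[X] (LinearMap.ker (Fintype.linearCombination A[X] b)) := by
  let T : Matrix (Fin s) (Fin s) A := fun i j => b.repr ((Polynomial.X : A[X]) • b i) j
  let r : Fin s → (Fin s → A[X]) := fun i => T.charmatrix i
  have hr : LinearIndependent A[X] r :=
    Matrix.linearIndependent_rows_of_det_ne_zero (T.charpoly_monic).ne_zero
  have hri : ∀ i, r i = Pi.single i Polynomial.X - fun j => Polynomial.C (T i j) := by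
    intro i
    ext1 j
    change T.charmatrix i j = _
    rw [Matrix.charmatrix_apply, Pi.sub_apply, Matrix.diagonal_apply, Pi.single_apply]
    simp only [eq_comm]
  have hC : ∀ c : Fin s → A, Fintype.linearCombination A[X] b (fun j => Polynomial.C (c j)) =
      ∑ j, c j • b j := by
    intro c
    rw [Fintype.linearCombination_apply]
    refine Finset.sum_congr rfl fun j _ => ?_
    rw [← mul_one (Polynomial.C (c j)), ← Polynomial.smul_eq_C_mul, smul_assoc, one_smul]
  have hk : LinearMap.ker (Fintype.linearCombination A[X] b) =
      Submodule.span A[X] (Set.range r) := by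
    have hle : Submodule.span A[X] (Set.range r) ≤
        LinearMap.ker (Fintype.linearCombination A[X] b) := by
      rw [Submodule.span_le]
      rintro _ ⟨i, rfl⟩
      rw [SetLike.mem_coe, LinearMap.mem_ker, hri, map_sub, hC, sub_eq_zero,
        Fintype.linearCombination_apply_single]
      exact (b.sum_repr _).symm
    refine le_antisymm ?_ hle
    have key : ∀ c : Fin s → A[X], ∃ c0 : Fin s → A,
        c - (fun j => Polynomial.C (c0 j)) ∈ Submodule.span A[X] (Set.range r) := by
      let S : AddSubgroup (Fin s → A[X]) :=
        { carrier := {c | ∃ c0 : Fin s → A,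
            c - (fun j => Polynomial.C (c0 j)) ∈ Submodule.span A[X] (Set.range r)}
          zero_mem' := ⟨0, by simp; exact Submodule.zero_mem _⟩
          add_mem' := by
            rintro x y ⟨x0, hx⟩ ⟨y0, hy⟩
            refine ⟨x0 + y0, ?_⟩
            convert Submodule.add_mem _ hx hy using 1
            ext1 j; simp; ring
          neg_mem' := by
            rintro x ⟨x0, hx⟩
            refine ⟨-x0, ?_⟩
            convert Submodule.neg_mem _ hx using 1
            ext1 j; simp; ring }
      have hX : ∀ c ∈ S, (Polynomial.X : A[X]) • c ∈ S := by
        rintro c ⟨c0, hc⟩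
        refine ⟨fun j => ∑ i, c0 i * T i j, ?_⟩
        have h1 := Submodule.smul_mem _ (Polynomial.X : A[X]) hc
        have h2 : ∑ i, (Polynomial.C (c0 i)) • r i ∈ Submodule.span A[X] (Set.range r) :=
          Submodule.sum_mem _ fun i _ => Submodule.smul_mem _ _ (Submodule.subset_span ⟨i, rfl⟩)
        convert Submodule.add_mem _ h1 h2 using 1
        ext1 j
        simp only [hri, Pi.sub_apply, Pi.smul_apply, Pi.add_apply, Finset.sum_apply, smul_eq_mul,
          mul_sub, Finset.sum_sub_distrib, map_sum, map_mul, Pi.single_apply, mul_ite, mul_zero,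
          Finset.sum_ite_eq, Finset.mem_univ, if_true]
        ring
      have hmon : ∀ (n : ℕ) (a : A) (i : Fin s), Pi.single i (Polynomial.C a * Polynomial.X ^ n) ∈ S := by
        intro n a i
        induction n with
        | zero =>
          refine ⟨Pi.single i a, ?_⟩
          convert Submodule.zero_mem _ using 1
          ext1 j
          by_cases h : j = i
          · subst h; simp
          · simp [h]
        | succ n ih =>
          convert hX _ ih using 1
          rw [← Pi.single_smul, smul_eq_mul]; congr 1; ring
      intro c
      change c ∈ S
      rw [← Finset.univ_sum_single c]
      refine AddSubgroup.sum_mem _ fun i _ => ?_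
      induction c i using Polynomial.induction_on' with
      | add p q hp hq => rw [Pi.single_add]; exact AddSubgroup.add_mem _ hp hq
      | monomial n a => rw [← Polynomial.C_mul_X_pow_eq_monomial]; exact hmon n a i
    intro c hc
    obtain ⟨c0, h0⟩ := key c
    have h1 := hle h0
    rw [LinearMap.mem_ker, map_sub, LinearMap.mem_ker.1 hc, zero_sub, neg_eq_zero, hC] at h1
    have h2 := Fintype.linearIndependent_iff.1 b.linearIndependent c0 h1
    have h3 : (fun j => Polynomial.C (c0 j)) = (0 : Fin s → A[X]) := by ext1 j; simp [h2]
    rwa [h3, sub_zero] at h0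
  rw [hk]
  have bb := Module.Basis.span hr
  exact ⟨Module.Free.of_basis bb, Module.Finite.of_basis bb⟩

end KeyLemma



section KeyLemma2
open Polynomial

variable {A : Type u} [CommRing A]

lemma projective_quot_of_retract {B P : Type u} [CommRing B] [Algebra A B] [AddCommGroup P]
    [Module A P] [Module B P] [IsScalarTower A B P] [Module.Projective A P] (N : Submodule B P)
    (i0 : P →ₗ[A] P) (hi0 : N.restrictScalars A ≤ LinearMap.ker i0)
    (h : ∀ p, p - i0 p ∈ N) : Module.Projective A (P ⧸ N) := by
  let i1 : (P ⧸ N) →ₗ[A] P := (N.restrictScalars A).liftQ i0 hi0 ∘ₗ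
    (Submodule.Quotient.restrictScalarsEquiv A N).symm.toLinearMap
  refine Module.Projective.of_split i1 (N.mkQ.restrictScalars A) ?_
  ext x
  obtain ⟨p, rfl⟩ := Submodule.mkQ_surjective _ x
  change N.mkQ (i0 p) = N.mkQ p
  rw [eq_comm, ← sub_eq_zero, ← map_sub]
  exact (Submodule.Quotient.mk_eq_zero _).2 (h p)

lemma key_quot [IsDomain A] (hA : ProjFree A)
    {P : Type u} [AddCommGroup P] [Module A P] [Module A[X] P] [IsScalarTower A A[X] P]
    [Module.Finite A[X] P] [Module.Projective A[X] P] {k : ℕ} (b : Fin k → P)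
    (hb : LinearIndependent A[X] b) (g : A[X]) (hg : g.Monic)
    (hgP : ∀ p : P, g • p ∈ LinearMap.range (Fintype.linearCombination A[X] b)) :
    Module.Free A (P ⧸ LinearMap.range (Fintype.linearCombination A[X] b)) ∧
      Module.Finite A (P ⧸ LinearMap.range (Fintype.linearCombination A[X] b)) := by
  set j := Fintype.linearCombination A[X] b with hj
  have hjinj : Function.Injective j := by
    rw [injective_iff_map_eq_zero]
    intro c hc
    ext1 i
    exact Fintype.linearIndependent_iff.1 hb c hc i
  have hPA : Module.Projective A P := projective_restrict
  let ej := LinearEquiv.ofInjective j hjinj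
  let φ : P →ₗ[A[X]] (Fin k → A[X]) := ej.symm.toLinearMap ∘ₗ
    (LinearMap.codRestrict (LinearMap.range j) (LinearMap.lsmul A[X] P g) hgP)
  have hφ : ∀ c, φ (j c) = g • c := by
    intro c
    change ej.symm _ = _
    rw [LinearEquiv.symm_apply_eq]
    apply Subtype.ext
    change g • j c = j (g • c)
    rw [map_smul]
  let ρ : P →ₗ[A] (Fin k → A[X]) := (divMonicHom g hg).compLeft (Fin k) ∘ₗ φ.restrictScalars A
  have hρ : ∀ c, ρ (j c) = c := by
    intro c
    ext1 i
    change (φ (j c) i) /ₘ g = _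
    rw [hφ, Pi.smul_apply, smul_eq_mul, mul_divByMonic_cancel_left _ hg]
  let i0 : P →ₗ[A] P := LinearMap.id - j.restrictScalars A ∘ₗ ρ
  have hi0 : (LinearMap.range j).restrictScalars A ≤ LinearMap.ker i0 := by
    rintro _ ⟨c, rfl⟩
    rw [LinearMap.mem_ker]
    change j c - j (ρ (j c)) = 0
    rw [hρ, sub_self]
  have hproj : Module.Projective A (P ⧸ LinearMap.range j) := by
    refine projective_quot_of_retract (LinearMap.range j) i0 hi0 fun p => ?_
    exact ⟨ρ p, (sub_sub_cancel p (j (ρ p))).symm⟩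
  have hfin : Module.Finite A (P ⧸ LinearMap.range j) := by
    refine finite_of_monic_torsion g hg ?_
    intro x
    obtain ⟨p, rfl⟩ := Submodule.mkQ_surjective _ x
    rw [← map_smul]
    exact (Submodule.Quotient.mk_eq_zero _).2 (hgP p)
  exact ⟨hA _, hfin⟩

lemma key_free [IsDomain A] (hA : ProjFree A) (hH : Herm A[X])
    {P : Type u} [AddCommGroup P] [Module A[X] P]
    [Module.Finite A[X] P] [Module.Projective A[X] P] {k : ℕ} (b : Fin k → P)
    (hb : LinearIndependent A[X] b) (g : A[X]) (hg : g.Monic)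
    (hgP : ∀ p : P, g • p ∈ LinearMap.range (Fintype.linearCombination A[X] b)) :
    Module.Free A[X] P := by
  letI : Module A P := Module.compHom P (Polynomial.C : A →+* A[X])
  haveI : IsScalarTower A A[X] P := ⟨fun a f p => by
    rw [Polynomial.smul_eq_C_mul, mul_smul]; rfl⟩
  obtain ⟨h1, h2⟩ := key_quot hA b hb g hg hgP
  set j := Fintype.linearCombination A[X] b with hj
  have hjinj : Function.Injective j := by
    rw [injective_iff_map_eq_zero]
    intro c hc
    ext1 i
    exact Fintype.linearIndependent_iff.1 hb c hc i
  have bM := Module.finBasis A (P ⧸ LinearMap.range j)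
  obtain ⟨h3, h4⟩ := charres bM
  generalize Module.finrank A (P ⧸ LinearMap.range j) = s at bM h3 h4
  generalize hε : Fintype.linearCombination A[X] bM = ε at h3 h4
  obtain ⟨h, hh⟩ := Module.projective_lifting_property (LinearMap.range j).mkQ ε
    (Submodule.mkQ_surjective _)
  have hh' : ∀ d, (LinearMap.range j).mkQ (h d) = ε d := fun d => LinearMap.congr_fun hh d
  let f : ((Fin k → A[X]) × (Fin s → A[X])) →ₗ[A[X]] P := j.coprod h
  have hf : ∀ c d, f (c, d) = j c + h d := fun c d => rfl
  have hεsurj : Function.Surjective ε := by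
    intro x
    refine ⟨fun i => Polynomial.C (bM.repr x i), ?_⟩
    rw [← hε, Fintype.linearCombination_apply]
    conv_rhs => rw [← bM.sum_repr x]
    refine Finset.sum_congr rfl fun j _ => ?_
    rw [← mul_one (Polynomial.C _), ← Polynomial.smul_eq_C_mul, smul_assoc, one_smul]
  have hfsurj : Function.Surjective f := by
    intro p
    obtain ⟨d, hd⟩ := hεsurj ((LinearMap.range j).mkQ p)
    have : (LinearMap.range j).mkQ (p - h d) = 0 := by rw [map_sub, hh', hd, sub_self]
    obtain ⟨c, hc⟩ := (Submodule.Quotient.mk_eq_zero _).1 this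
    exact ⟨(c, d), by rw [hf, hc]; abel⟩
  let κ : LinearMap.ker f →ₗ[A[X]] LinearMap.ker ε :=
    LinearMap.codRestrict _ (LinearMap.snd A[X] _ _ ∘ₗ (LinearMap.ker f).subtype) (by
      rintro ⟨⟨c, d⟩, hcd⟩
      rw [LinearMap.mem_ker, hf] at hcd
      rw [LinearMap.mem_ker, ← hh']
      refine (Submodule.Quotient.mk_eq_zero _).2 ⟨-c, ?_⟩
      rw [map_neg]
      exact neg_eq_of_add_eq_zero_right hcd)
  have hκ : Function.Bijective κ := by
    constructor
    · rw [injective_iff_map_eq_zero]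
      rintro ⟨⟨c, d⟩, hcd⟩ h0
      have hd : d = 0 := congr_arg Subtype.val h0
      subst hd
      rw [LinearMap.mem_ker, hf, map_zero, add_zero] at hcd
      have : c = 0 := hjinj (by rw [hcd, map_zero])
      subst this
      rfl
    · rintro ⟨d, hd⟩
      rw [LinearMap.mem_ker, ← hh'] at hd
      obtain ⟨c, hc⟩ := (Submodule.Quotient.mk_eq_zero _).1 hd
      refine ⟨⟨(-c, d), ?_⟩, rfl⟩
      rw [LinearMap.mem_ker, hf, map_neg, hc]; abel
  have eκ := LinearEquiv.ofBijective κ hκ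
  have i1 : Module.Free A[X] (LinearMap.ker f) := Module.Free.of_equiv eκ.symm
  have i2 : Module.Finite A[X] (LinearMap.ker f) := Module.Finite.equiv eκ.symm
  exact free_of_resolution hH f hfsurj

end KeyLemma2

lemma exists_free_sub {R : Type u} [CommRing R] [IsDomain R] {P : Type u} [AddCommGroup P]
    [Module R P] [Module.Finite R P] : ∃ (k : ℕ) (b : Fin k → P) (f : R),
      LinearIndependent R b ∧ f ≠ 0 ∧
        ∀ p : P, f • p ∈ LinearMap.range (Fintype.linearCombination R b) := by
  obtain ⟨b, hb⟩ := exists_linearIndependent_of_le_finrank (le_refl (Module.finrank R P))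
  have h1 : ∀ p : P, ∃ a : R, a ≠ 0 ∧ a • p ∈ LinearMap.range (Fintype.linearCombination R b) := by
    intro p
    by_contra! hc
    have hli : LinearIndependent R (Fin.cons p b : Fin (Module.finrank R P + 1) → P) := by
      rw [Fintype.linearIndependent_iff]
      intro c hs
      rw [Fin.sum_univ_succ] at hs
      simp only [Fin.cons_zero, Fin.cons_succ] at hs
      have h0 : c 0 = 0 := by
        by_contra h0
        refine hc _ h0 ⟨fun i => - c i.succ, ?_⟩
        rw [Fintype.linearCombination_apply]
        simp only [neg_smul, Finset.sum_neg_distrib]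
        exact neg_eq_of_add_eq_zero_left hs
      rw [h0, zero_smul, zero_add] at hs
      intro i
      refine Fin.cases h0 (fun i => ?_) i
      exact Fintype.linearIndependent_iff.1 hb (fun i => c i.succ) hs i
    have := hli.fintype_card_le_finrank
    simp at this
  choose a ha0 ha using h1
  obtain ⟨S, hS⟩ := (inferInstance : Module.Finite R P).fg_top
  refine ⟨_, b, ∏ p ∈ S, a p, hb, Finset.prod_ne_zero_iff.2 fun p _ => ha0 p, ?_⟩
  intro p
  have hp : p ∈ Submodule.span R (S : Set P) := hS ▸ Submodule.mem_top
  induction hp using Submodule.span_induction with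
  | mem x hx =>
    obtain ⟨c, hc⟩ := Finset.dvd_prod_of_mem a hx
    rw [hc, mul_comm, mul_smul]
    exact Submodule.smul_mem _ _ (ha x)
  | zero => rw [smul_zero]; exact Submodule.zero_mem _
  | add x y _ _ hx hy => rw [smul_add]; exact Submodule.add_mem _ hx hy
  | smul r x _ hx => rw [smul_comm]; exact Submodule.smul_mem _ _ hx

lemma ProjFree.of_ringEquiv {R S : Type u} [CommRing R] [CommRing S] (e : R ≃+* S)
    (h : ProjFree S) : ProjFree R := by
  intro P _ _ _ _
  letI : Module S P := Module.compHom P (e.symm : S →+* R)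
  letI := RingHomInvPair.of_ringEquiv e
  letI := RingHomInvPair.of_ringEquiv e.symm
  let E : P ≃ₛₗ[(e : R →+* S)] P :=
    { (LinearEquiv.refl R P).toAddEquiv with
      map_smul' := fun r p => by
        change r • p = e.symm (e r) • p
        simp }
  haveI : Module.Projective S P := Module.Projective.of_equiv E
  haveI : Module.Finite S P := Module.Finite.of_surjective E.toLinearMap E.surjective
  haveI : Module.Free S P := h P
  exact Module.Free.of_equiv E.symm

lemma Herm.of_ringEquiv {R S : Type*} [CommRing R] [CommRing S] (e : R ≃+* S)
    (h : Herm R) : Herm S := by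
  intro ι _ _ v i0 hv
  have h1 := (h ι ((e.symm : S →+* R) ∘ v) i0 (unimodular_map _ hv)).map (e : R →+* S)
  refine (VEq.of_eq ?_).trans (h1.trans (VEq.of_eq ?_))
  · ext1 j; simp
  · ext1 j
    by_cases hj : j = i0
    · subst hj; simp
    · simp [hj]

lemma projFree_of_monic {R A : Type u} [CommRing R] [CommRing A] [IsDomain A] 
    (hA : ProjFree A) (hH : Herm (Polynomial A)) (e : R ≃+* Polynomial A)
    {P : Type u} [AddCommGroup P]
    [Module R P] [Module.Finite R P] [Module.Projective R P] {k : ℕ} (b : Fin k → P) (f : R)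
    (hb : LinearIndependent R b)
    (hf : ∀ p : P, f • p ∈ LinearMap.range (Fintype.linearCombination R b))
    (c : (Polynomial A)ˣ) (hc : (c * e f).Monic) : Module.Free R P := by
  letI : Module (Polynomial A) P := Module.compHom P (e.symm : (Polynomial A) →+* R)
  have hsm : ∀ (x : Polynomial A) (p : P), x • p = e.symm x • p := fun _ _ => rfl
  letI := RingHomInvPair.of_ringEquiv e
  letI := RingHomInvPair.of_ringEquiv e.symm
  let E : P ≃ₛₗ[(e : R →+* Polynomial A)] P :=
    { (LinearEquiv.refl R P).toAddEquiv with
      map_smul' := fun r p => by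
        change r • p = e.symm (e r) • p
        simp }
  haveI : Module.Projective (Polynomial A) P := Module.Projective.of_equiv E
  haveI : Module.Finite (Polynomial A) P := Module.Finite.of_surjective E.toLinearMap E.surjective
  haveI : Module.Free (Polynomial A) P := by
    refine key_free hA hH b ?_ _ hc ?_
    · rw [Fintype.linearIndependent_iff] at hb ⊢
      intro x hx i
      have := hb (fun i => e.symm (x i)) hx i
      simpa using this
    · intro p
      obtain ⟨d, hd⟩ := hf p
      refine ⟨fun i => c * e (d i), ?_⟩
      rw [Fintype.linearCombination_apply] at hd ⊢
      rw [mul_smul, hsm (e f), RingEquiv.symm_apply_apply, ← hd, Finset.smul_sum]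
      refine Finset.sum_congr rfl fun i _ => ?_
      rw [mul_smul, hsm (e _), RingEquiv.symm_apply_apply]
  exact Module.Free.of_equiv E.symm

theorem projFree_mvPolynomial (K : Type u) [Field K] (n : ℕ) :
    ProjFree (MvPolynomial (Fin n) K) := by
  induction n with
  | zero =>
    refine ProjFree.of_ringEquiv (MvPolynomial.isEmptyRingEquiv K (Fin 0)) ?_
    intro P _ _ _ _
    infer_instance
  | succ n ih =>
    intro P _ _ _ _
    obtain ⟨k, b, f, hb, hf0, hf⟩ := exists_free_sub (R := MvPolynomial (Fin (n + 1)) K) (P := P)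
    obtain ⟨e, c, hc⟩ := NNorm.exists_monic f hf0
    exact projFree_of_monic ih (Herm.of_ringEquiv e (herm_mvPolynomial K (n + 1))) e b f hb hf c hc


section Minors

variable {R : Type*} [CommRing R]

lemma submatrix_det_mem {l m k : ℕ} (B : Matrix (Fin l) (Fin m) R) (s : Fin k → Fin l)
    (g : Fin k → Fin m) : (B.submatrix s g).det ∈ Ideal.span (minorsSet B k) := by
  by_cases hs : Function.Injective s
  · by_cases hg : Function.Injective g
    · exact Ideal.subset_span ⟨⟨s, hs⟩, ⟨g, hg⟩, rfl⟩
    · have : (B.submatrix s g).det = 0 := by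
        simp only [Function.Injective, not_forall] at hg
        obtain ⟨i, j, hij, hne⟩ := hg
        exact Matrix.det_zero_of_column_eq hne (fun x => by simp [hij])
      rw [this]; exact Ideal.zero_mem _
  · have : (B.submatrix s g).det = 0 := by
      simp only [Function.Injective, not_forall] at hs
      obtain ⟨i, j, hij, hne⟩ := hs
      exact Matrix.det_zero_of_row_eq hne (by ext x; simp [hij])
    rw [this]; exact Ideal.zero_mem _

lemma det_mul_mem_right {l p m k : ℕ} (A : Matrix (Fin l) (Fin p) R) (B : Matrix (Fin p) (Fin m) R)
    (f : Fin k → Fin l) (g : Fin k → Fin m) :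
    ((A * B).submatrix f g).det ∈ Ideal.span (minorsSet B k) := by
  have h1 : (A * B).submatrix f g = fun i => ∑ x, A (f i) x • (fun j => B x (g j)) := by
    ext i j
    simp [Matrix.mul_apply, Finset.sum_apply]
  have h2 : ((A * B).submatrix f g).det = ∑ s : Fin k → Fin p,
      (∏ i, A (f i) (s i)) * (B.submatrix s g).det := by
    rw [h1]
    change Matrix.detRowAlternating.toMultilinearMap _ = _
    rw [MultilinearMap.map_sum]
    refine Finset.sum_congr rfl fun s _ => ?_
    rw [MultilinearMap.map_smul_univ]
    rfl
  rw [h2]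
  exact Ideal.sum_mem _ fun s _ => Ideal.mul_mem_left _ _ (submatrix_det_mem B s g)

lemma minorsSet_transpose {l m k : ℕ} (A : Matrix (Fin l) (Fin m) R) :
    minorsSet Aᵀ k = minorsSet A k := by
  ext x
  constructor
  · rintro ⟨r, c, rfl⟩
    exact ⟨c, r, by rw [← Matrix.transpose_submatrix, Matrix.det_transpose]⟩
  · rintro ⟨r, c, rfl⟩
    exact ⟨c, r, by rw [← Matrix.transpose_submatrix, Matrix.det_transpose]⟩

lemma span_minors_mul_right {l p m k : ℕ} (A : Matrix (Fin l) (Fin p) R)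
    (B : Matrix (Fin p) (Fin m) R) :
    Ideal.span (minorsSet (A * B) k) ≤ Ideal.span (minorsSet B k) := by
  rw [Ideal.span_le]
  rintro _ ⟨r, c, rfl⟩
  exact det_mul_mem_right A B r c

lemma span_minors_mul_left {l p m k : ℕ} (A : Matrix (Fin l) (Fin p) R)
    (B : Matrix (Fin p) (Fin m) R) :
    Ideal.span (minorsSet (A * B) k) ≤ Ideal.span (minorsSet A k) := by
  rw [← minorsSet_transpose, ← minorsSet_transpose A, Matrix.transpose_mul]
  exact span_minors_mul_right _ _

lemma span_minors_of_matEquiv {l m k : ℕ} {F P : Matrix (Fin l) (Fin m) R} (h : MatEquiv F P) :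
    Ideal.span (minorsSet F k) = Ideal.span (minorsSet P k) := by
  obtain ⟨U, V, hU, hV, rfl⟩ := h
  apply le_antisymm
  · exact (span_minors_mul_left _ _).trans (span_minors_mul_right _ _)
  · have : P = U⁻¹ * (U * P * V) * V⁻¹ := by
      rw [Matrix.mul_assoc U P V, Matrix.nonsing_inv_mul_cancel_left _ _ hU,
        Matrix.mul_nonsing_inv_cancel_right _ _ hV]
    conv_lhs => rw [this]
    exact (span_minors_mul_left _ _).trans (span_minors_mul_right _ _)

/-- The padded block matrix. -/
def padM {r : ℕ} (l m : ℕ) (F1 : Matrix (Fin r) (Fin r) R) : Matrix (Fin l) (Fin m) R :=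
  Matrix.of fun i : Fin l => fun j : Fin m =>
        if hi : (i : ℕ) < r then
          if hj : (j : ℕ) < r then F1 ⟨(i : ℕ), hi⟩ ⟨(j : ℕ), hj⟩ else 0
        else 0

lemma span_minors_pad {r l m k : ℕ} (hl : r ≤ l) (hm : r ≤ m) (F1 : Matrix (Fin r) (Fin r) R) :
    Ideal.span (minorsSet (padM l m F1) k) = Ideal.span (minorsSet F1 k) := by
  apply le_antisymm
  · rw [Ideal.span_le]
    rintro _ ⟨f, g, rfl⟩
    by_cases hf : ∀ i, (f i : ℕ) < r
    · by_cases hg : ∀ i, (g i : ℕ) < r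
      · have : (padM l m F1).submatrix f g =
            F1.submatrix (fun i => ⟨f i, hf i⟩) (fun i => ⟨g i, hg i⟩) := by
          ext i j
          simp [padM, hf i, hg j]
        rw [this]
        exact submatrix_det_mem _ _ _
      · push Not at hg
        obtain ⟨j, hj⟩ := hg
        rw [Matrix.det_eq_zero_of_column_eq_zero j]
        · exact Ideal.zero_mem _
        · intro i; simp [padM, Nat.not_lt.2 hj]
    · push Not at hf
      obtain ⟨j, hj⟩ := hf
      rw [Matrix.det_eq_zero_of_row_eq_zero j]
      · exact Ideal.zero_mem _
      · intro i; simp [padM, Nat.not_lt.2 hj]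
  · rw [Ideal.span_le]
    rintro _ ⟨f, g, rfl⟩
    have : F1.submatrix f g =
        (padM l m F1).submatrix (Fin.castLE hl ∘ f) (Fin.castLE hm ∘ g) := by
      ext i j
      simp [padM]
    rw [this]
    exact submatrix_det_mem _ _ _

lemma isGcdMinors_iff {l m k : ℕ} {F : Matrix (Fin l) (Fin m) R} {d : R} :
    IsGcdMinors F k d ↔ Ideal.span (minorsSet F k) ≤ Ideal.span {d} ∧
      ∀ e : R, Ideal.span (minorsSet F k) ≤ Ideal.span {e} → e ∣ d := by
  have : ∀ e : R, (∀ p ∈ minorsSet F k, e ∣ p) ↔ Ideal.span (minorsSet F k) ≤ Ideal.span {e} := by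
    intro e
    rw [Ideal.span_le]
    simp only [Set.subset_def, SetLike.mem_coe, Ideal.mem_span_singleton]
  simp only [IsGcdMinors, this]

lemma span_mul_reducedIdeal {l m k : ℕ} {F : Matrix (Fin l) (Fin m) R} {d : R}
    (h : ∀ p ∈ minorsSet F k, d ∣ p) :
    Ideal.span {d} * reducedIdeal F k d = Ideal.span (minorsSet F k) := by
  rw [reducedIdeal, Ideal.span_mul_span']
  congr 1
  ext x
  simp only [Set.singleton_mul, Set.mem_image, Set.mem_setOf_eq]
  constructor
  · rintro ⟨v, hv, rfl⟩; exact hv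
  · intro hx
    obtain ⟨v, rfl⟩ := h x hx
    exact ⟨v, hx, rfl⟩

lemma reducedIdeal_zero {l m k : ℕ} {F : Matrix (Fin l) (Fin m) R}
    (h : ∀ p ∈ minorsSet F k, (0 : R) ∣ p) (hl : k ≤ l) (hm : k ≤ m) :
    reducedIdeal F k 0 = ⊤ := by
  rw [Ideal.eq_top_iff_one]
  apply Ideal.subset_span
  have h1 : (F.submatrix (Fin.castLEEmb hl) (Fin.castLEEmb hm)).det ∈ minorsSet F k := ⟨_, _, rfl⟩
  have h2 := zero_dvd_iff.1 (h _ h1)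
  rw [Set.mem_setOf_eq, zero_mul, ← h2]
  exact h1

lemma reducedIdeal_congr [IsDomain R] {l m l' m' k : ℕ} {F : Matrix (Fin l) (Fin m) R}
    {F' : Matrix (Fin l') (Fin m') R}
    (hs : Ideal.span (minorsSet F k) = Ideal.span (minorsSet F' k))
    (hl : k ≤ l) (hm : k ≤ m) (hl' : k ≤ l') (hm' : k ≤ m') {d d' : R}
    (hd : IsGcdMinors F k d) (hd' : IsGcdMinors F' k d') :
    reducedIdeal F' k d' = reducedIdeal F k d := by
  have e1 := isGcdMinors_iff.1 hd
  have e2 := isGcdMinors_iff.1 hd'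
  have h1 : d ∣ d' := e2.2 d (hs ▸ e1.1)
  have h2 : d' ∣ d := e1.2 d' (hs ▸ e2.1)
  by_cases h0 : d = 0
  · subst h0
    have h0' := zero_dvd_iff.1 h1
    subst h0'
    rw [reducedIdeal_zero hd.1 hl hm, reducedIdeal_zero hd'.1 hl' hm']
  · have h3 : Ideal.span {d} = Ideal.span {d'} :=
      le_antisymm (Ideal.span_singleton_le_span_singleton.2 h2)
        (Ideal.span_singleton_le_span_singleton.2 h1)
    have h4 := span_mul_reducedIdeal hd.1
    have h5 := span_mul_reducedIdeal hd'.1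
    rw [← h3, ← hs, ← h4] at h5
    exact (Ideal.span_singleton_mul_right_inj h0).1 h5

lemma isGcdMinors_det {r : ℕ} (F1 : Matrix (Fin r) (Fin r) R) : IsGcdMinors F1 r F1.det := by
  constructor
  · rintro _ ⟨f, g, rfl⟩
    let ef : Fin r ≃ Fin r := Equiv.ofBijective f (Finite.injective_iff_bijective.1 f.injective)
    let eg : Fin r ≃ Fin r := Equiv.ofBijective g (Finite.injective_iff_bijective.1 g.injective)
    have : F1.submatrix f g = (F1.submatrix id eg).submatrix ef id := by ext; rfl
    rw [this, Matrix.det_permute, Matrix.det_permute']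
    exact Dvd.dvd.mul_left (Dvd.intro_left _ rfl) _
  · intro e he
    exact he _ ⟨Function.Embedding.refl _, Function.Embedding.refl _, rfl⟩

end Minors


section Inner

variable {R : Type*} [CommRing R]

lemma bordered [IsDomain R] {l m r : ℕ} (F : Matrix (Fin l) (Fin m) R)
    (hF : ∀ p ∈ minorsSet F (r + 1), p = 0) (I : Fin r → Fin l) (J : Fin r → Fin m)
    (hΔ : (F.submatrix I J).det ≠ 0) :
    F.submatrix id J * (F.submatrix I J).adjugate * F.submatrix I id = (F.submatrix I J).det • F := by
  ext i j
  set A := F.submatrix I J with hA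
  set B : Matrix (Fin r) Unit R := Matrix.of fun a _ => F (I a) j with hB
  set Cm : Matrix Unit (Fin r) R := Matrix.of fun _ a => F i (J a) with hC
  set D : Matrix Unit Unit R := Matrix.of fun _ _ => F i j with hD
  have h0 : (Matrix.fromBlocks A B Cm D).det = 0 := by
    let e : Fin (r + 1) ≃ Fin r ⊕ Unit := Fintype.equivOfCardEq (by simp)
    rw [← Matrix.det_submatrix_equiv_self e]
    have h1 : (Matrix.fromBlocks A B Cm D).submatrix e e =
        F.submatrix (Sum.elim I (fun _ => i) ∘ e) (Sum.elim J (fun _ => j) ∘ e) := by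
      rw [← Matrix.submatrix_submatrix]
      congr 1
      ext a b
      rcases a with a | a <;> rcases b with b | b <;> simp [hA, hB, hC, hD]
    rw [h1]
    have h2 := submatrix_det_mem F (Sum.elim I (fun _ => i) ∘ e) (Sum.elim J (fun _ => j) ∘ e)
    have h3 : Ideal.span (minorsSet F (r + 1)) = ⊥ := by
      rw [Ideal.span_eq_bot]; exact hF
    rw [h3] at h2
    simpa using h2
  have h1 : Matrix.fromBlocks A B Cm D *
      Matrix.fromBlocks 1 (-(A.adjugate * B)) 0 (A.det • (1 : Matrix Unit Unit R)) =
      Matrix.fromBlocks A 0 Cm (A.det • D - Cm * A.adjugate * B) := by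
    rw [Matrix.fromBlocks_multiply]
    congr 1
    · simp
    · rw [Matrix.mul_neg, ← Matrix.mul_assoc, Matrix.mul_adjugate]; simp
    · simp
    · rw [Matrix.mul_neg, ← Matrix.mul_assoc]; simp [sub_eq_neg_add]
  have h2 := congr_arg Matrix.det h1
  rw [Matrix.det_mul, h0, zero_mul, Matrix.det_fromBlocks_zero₁₂] at h2
  have h3 := (mul_eq_zero.1 h2.symm).resolve_left hΔ
  rw [Matrix.det_unique] at h3
  have h4 : (F.submatrix id J * A.adjugate * F.submatrix I id) i j =
      (Cm * A.adjugate * B) default default := by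
    simp [Matrix.mul_apply, hB, hC]
  rw [h4, Matrix.smul_apply]
  exact (sub_eq_zero.1 h3).symm

lemma mul_adjugate_row {l m r : ℕ} (F : Matrix (Fin l) (Fin m) R)
    (I : Fin r → Fin l) (J : Fin r → Fin m) (i : Fin l) (b : Fin r) :
    (F.submatrix id J * (F.submatrix I J).adjugate) i b =
      (F.submatrix (Function.update I b i) J).det := by
  have h1 : (F.submatrix id J * (F.submatrix I J).adjugate) i b =
      (Matrix.cramer (F.submatrix I J)ᵀ (fun a => F i (J a))) b := by
    rw [Matrix.cramer_eq_adjugate_mulVec, ← Matrix.adjugate_transpose]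
    simp [Matrix.mul_apply, Matrix.mulVec, dotProduct, mul_comm]
  rw [h1, Matrix.cramer_transpose_apply]
  congr 1
  ext x y
  by_cases hx : x = b
  · subst hx; simp
  · simp [hx]

lemma adjugate_mul_col {l m r : ℕ} (F : Matrix (Fin l) (Fin m) R)
    (I : Fin r → Fin l) (J : Fin r → Fin m) (a : Fin r) (j : Fin m) :
    ((F.submatrix I J).adjugate * F.submatrix I id) a j =
      (F.submatrix I (Function.update J a j)).det := by
  have h1 : ((F.submatrix I J).adjugate * F.submatrix I id) a j =
      (Matrix.cramer (F.submatrix I J) (fun b => F (I b) j)) a := by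
    rw [Matrix.cramer_eq_adjugate_mulVec]
    simp [Matrix.mul_apply, Matrix.mulVec, dotProduct]
  rw [h1, Matrix.cramer_apply]
  congr 1
  ext x y
  by_cases hx : y = a
  · subst hx; simp
  · simp [hx]

lemma exists_smul_of_dvd {p q : Type*} {d : R} (M : Matrix p q R) (h : ∀ i j, d ∣ M i j) :
    ∃ E, M = d • E := by
  choose E hE using h
  exact ⟨Matrix.of E, by ext i j; simpa using hE i j⟩

/-- `v` has a partial generalized inverse. -/
def GoodV {l m : ℕ} (F : Matrix (Fin l) (Fin m) R) (d v : R) : Prop :=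
  ∃ G : Matrix (Fin m) (Fin l) R, F * G * F = (d * v) • F ∧ (∃ E, F * G = d • E) ∧
    ∃ E', G * F = d • E'

lemma goodV_of_minor [IsDomain R] {l m r : ℕ} (F : Matrix (Fin l) (Fin m) R)
    (hF : ∀ p ∈ minorsSet F (r + 1), p = 0) {d v : R} (hd : ∀ p ∈ minorsSet F r, d ∣ p)
    (hv : d * v ∈ minorsSet F r) : GoodV F d v := by
  obtain ⟨I, J, hIJ⟩ := hv
  by_cases h0 : d * v = 0
  · exact ⟨0, by simp [h0], ⟨0, by simp⟩, ⟨0, by simp⟩⟩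
  have hd' : ∀ (f : Fin r → Fin l) (g : Fin r → Fin m), d ∣ (F.submatrix f g).det := by
    intro f g
    have h1 := submatrix_det_mem F f g
    have h2 : Ideal.span (minorsSet F r) ≤ Ideal.span {d} := by
      rw [Ideal.span_le]
      exact fun p hp => Ideal.mem_span_singleton.2 (hd p hp)
    exact Ideal.mem_span_singleton.1 (h2 h1)
  have hb := bordered F hF I J (hIJ ▸ h0)
  have hJ : F * (1 : Matrix (Fin m) (Fin m) R).submatrix id J = F.submatrix id J := by
    ext i j; simp [Matrix.mul_apply, Matrix.one_apply]
  have hI : (1 : Matrix (Fin l) (Fin l) R).submatrix I id * F = F.submatrix I id := by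
    ext i j; simp [Matrix.mul_apply, Matrix.one_apply]
  obtain ⟨E, hE⟩ := exists_smul_of_dvd (F.submatrix id J * (F.submatrix I J).adjugate)
    (fun i b => by rw [mul_adjugate_row]; exact hd' _ _)
  obtain ⟨E', hE'⟩ := exists_smul_of_dvd ((F.submatrix I J).adjugate * F.submatrix I id)
    (fun i b => by rw [adjugate_mul_col]; exact hd' _ _)
  have h1 : F * ((1 : Matrix (Fin m) (Fin m) R).submatrix id J * (F.submatrix I J).adjugate *
      (1 : Matrix (Fin l) (Fin l) R).submatrix I id) =
      F.submatrix id J * (F.submatrix I J).adjugate * (1 : Matrix (Fin l) (Fin l) R).submatrix I id := by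
    rw [← Matrix.mul_assoc, ← Matrix.mul_assoc, hJ]
  refine ⟨(1 : Matrix (Fin m) (Fin m) R).submatrix id J * (F.submatrix I J).adjugate *
    (1 : Matrix (Fin l) (Fin l) R).submatrix I id, ?_, ?_, ?_⟩
  · rw [h1, Matrix.mul_assoc, hI, hb, hIJ]
  · rw [h1, hE]
    exact ⟨_, Matrix.smul_mul _ _ _⟩
  · rw [Matrix.mul_assoc, hI, Matrix.mul_assoc, hE']
    exact ⟨_, Matrix.mul_smul _ _ _⟩

lemma goodV_one [IsDomain R] {l m r : ℕ} (F : Matrix (Fin l) (Fin m) R)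
    (hF : ∀ p ∈ minorsSet F (r + 1), p = 0) {d : R} (hd : ∀ p ∈ minorsSet F r, d ∣ p)
    (htop : reducedIdeal F r d = ⊤) : GoodV F d 1 := by
  let S : Ideal R :=
    { carrier := {v | GoodV F d v}
      zero_mem' := ⟨0, by simp, ⟨0, by simp⟩, ⟨0, by simp⟩⟩
      add_mem' := by
        rintro a b ⟨G, h1, ⟨E, h2⟩, ⟨E', h3⟩⟩ ⟨G2, k1, ⟨K, k2⟩, ⟨K', k3⟩⟩
        refine ⟨G + G2, ?_, ⟨E + K, ?_⟩, ⟨E' + K', ?_⟩⟩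
        · rw [Matrix.mul_add, Matrix.add_mul, h1, k1, mul_add, add_smul]
        · rw [Matrix.mul_add, h2, k2, smul_add]
        · rw [Matrix.add_mul, h3, k3, smul_add]
      smul_mem' := by
        rintro c a ⟨G, h1, ⟨E, h2⟩, ⟨E', h3⟩⟩
        refine ⟨c • G, ?_, ⟨c • E, ?_⟩, ⟨c • E', ?_⟩⟩
        · rw [Matrix.mul_smul, Matrix.smul_mul, h1, smul_smul, smul_eq_mul]; congr 1; ring
        · rw [Matrix.mul_smul, h2, smul_comm]
        · rw [Matrix.smul_mul, h3, smul_comm] }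
  have h1 : reducedIdeal F r d ≤ S := by
    rw [reducedIdeal, Ideal.span_le]
    intro v hv
    exact goodV_of_minor F hF hd hv
  rw [htop] at h1
  exact h1 (Submodule.mem_top (x := (1 : R)))

lemma smul_cancel_matrix [IsDomain R] {p q : Type*} {d : R} (hd : d ≠ 0) {M N : Matrix p q R}
    (h : d • M = d • N) : M = N := by
  ext i j
  have := congr_fun (congr_fun h i) j
  simpa [hd] using this

/-- The two idempotents attached to `F`. -/
lemma exists_idempotents [IsDomain R] {l m r : ℕ} (F : Matrix (Fin l) (Fin m) R)
    (hF : ∀ p ∈ minorsSet F (r + 1), p = 0) {d : R} (hd : ∀ p ∈ minorsSet F r, d ∣ p)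
    (htop : reducedIdeal F r d = ⊤) (hd0 : d ≠ 0) :
    ∃ (G : Matrix (Fin m) (Fin l) R) (E : Matrix (Fin l) (Fin l) R) (E' : Matrix (Fin m) (Fin m) R),
      E * E = E ∧ E' * E' = E' ∧ E * F = F ∧ F * E' = F ∧ F * G = d • E ∧ G * F = d • E' := by
  obtain ⟨G, h1, ⟨E, h2⟩, ⟨E', h3⟩⟩ := goodV_one F hF hd htop
  rw [mul_one] at h1
  have hEF : E * F = F := smul_cancel_matrix hd0 (by rw [← Matrix.smul_mul, ← h2, h1])
  have hFE : F * E' = F := smul_cancel_matrix hd0 (by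
    rw [← Matrix.mul_smul, ← h3, ← Matrix.mul_assoc, h1])
  refine ⟨G, E, E', ?_, ?_, hEF, hFE, h2, h3⟩
  · exact smul_cancel_matrix hd0 (by rw [← Matrix.mul_smul, ← h2, ← Matrix.mul_assoc, hEF])
  · exact smul_cancel_matrix hd0 (by rw [← Matrix.smul_mul, ← h3, Matrix.mul_assoc, hFE])

end Inner


section Idem

variable {R : Type u} [CommRing R]

lemma exists_factor (hR : ProjFree R) {l : ℕ} (E : Matrix (Fin l) (Fin l) R) (hE : E * E = E) :
    ∃ (s : ℕ) (B : Matrix (Fin l) (Fin s) R) (C : Matrix (Fin s) (Fin l) R), B * C = E ∧ C * B = 1 := by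
  rcases subsingleton_or_nontrivial R with hs | hs
  · exact ⟨0, 0, 0, Subsingleton.elim _ _, Subsingleton.elim _ _⟩
  let Q := LinearMap.range E.mulVecLin
  have hEE : ∀ x, E.mulVecLin (E.mulVecLin x) = E.mulVecLin x := by
    intro x; simp [Matrix.mulVec_mulVec, hE]
  let π : (Fin l → R) →ₗ[R] Q := E.mulVecLin.rangeRestrict
  have hπ : ∀ q : Q, π q = q := by
    rintro ⟨_, x, rfl⟩
    exact Subtype.ext (hEE x)
  haveI : Module.Projective R Q := Module.Projective.of_split Q.subtype π (by
    ext1 q; exact hπ q)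
  haveI : Module.Finite R Q := Module.Finite.range _
  haveI : Module.Free R Q := hR Q
  let b := Module.finBasis R Q
  let β : (Fin (Module.finrank R Q) → R) →ₗ[R] (Fin l → R) :=
    Q.subtype ∘ₗ b.equivFun.symm.toLinearMap
  let γ : (Fin l → R) →ₗ[R] (Fin (Module.finrank R Q) → R) := b.equivFun.toLinearMap ∘ₗ π
  refine ⟨Module.finrank R Q, LinearMap.toMatrix' β, LinearMap.toMatrix' γ, ?_, ?_⟩
  · rw [← LinearMap.toMatrix'_comp]
    have : β ∘ₗ γ = E.mulVecLin := by
      apply LinearMap.ext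
      intro x
      change ((b.equivFun.symm (b.equivFun (π x)) : Q) : Fin l → R) = _
      rw [LinearEquiv.symm_apply_apply]
      rfl
    rw [this]
    exact LinearMap.toMatrix'_toLin' E
  · rw [← LinearMap.toMatrix'_comp]
    have : γ ∘ₗ β = LinearMap.id := by
      apply LinearMap.ext
      intro x
      change b.equivFun (π (b.equivFun.symm x : Q)) = x
      rw [hπ, LinearEquiv.apply_symm_apply]
    rw [this, LinearMap.toMatrix'_id]

/-- The standard idempotent. -/
def stdIdem (R : Type*) [CommRing R] (l s : ℕ) : Matrix (Fin l) (Fin l) R :=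
  Matrix.diagonal fun i => if (i : ℕ) < s then 1 else 0

lemma idem_diag [Nontrivial R] (hR : ProjFree R) {l : ℕ} (E : Matrix (Fin l) (Fin l) R)
    (hE : E * E = E) :
    ∃ (s : ℕ) (U U' : Matrix (Fin l) (Fin l) R), s ≤ l ∧ U * U' = 1 ∧ U' * U = 1 ∧
      E = U * stdIdem R l s * U' := by
  obtain ⟨s, B, C, h1, h2⟩ := exists_factor hR E hE
  have hE' : (1 - E) * (1 - E) = 1 - E := by
    rw [Matrix.sub_mul, Matrix.mul_sub E, hE]; simp
  obtain ⟨t, B', C', h1', h2'⟩ := exists_factor hR (1 - E) hE'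
  have hCB' : C * B' = 0 := by
    calc C * B' = (C * B) * C * (B' * (C' * B')) := by rw [h2, h2']; simp
      _ = C * ((B * C) * (B' * C')) * B' := by simp only [Matrix.mul_assoc]
      _ = 0 := by rw [h1, h1', Matrix.mul_sub, hE]; simp
  have hC'B : C' * B = 0 := by
    calc C' * B = (C' * B') * C' * (B * (C * B)) := by rw [h2, h2']; simp
      _ = C' * ((B' * C') * (B * C)) * B := by simp only [Matrix.mul_assoc]
      _ = 0 := by rw [h1, h1', Matrix.sub_mul, hE]; simp
  have hUU : Matrix.fromCols B B' * Matrix.fromRows C C' = 1 := by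
    rw [Matrix.fromCols_mul_fromRows, h1, h1']; simp
  have hUU' : Matrix.fromRows C C' * Matrix.fromCols B B' = 1 := by
    rw [Matrix.fromRows_mul_fromCols, h2, h2', hCB', hC'B, Matrix.fromBlocks_one]
  have hcard : s + t = l := by
    have := Matrix.square_of_invertible (Matrix.fromCols B B') (Matrix.fromRows C C') hUU hUU'
    simpa using this.symm
  let e : Fin l ≃ Fin s ⊕ Fin t := (finCongr hcard.symm).trans finSumFinEquiv.symm
  have hmid : ((Matrix.fromBlocks 1 0 0 0 : Matrix (Fin s ⊕ Fin t) (Fin s ⊕ Fin t) R)).submatrix e e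
      = stdIdem R l s := by
    subst hcard
    ext i j
    obtain ⟨i, rfl⟩ := finSumFinEquiv.surjective i
    obtain ⟨j, rfl⟩ := finSumFinEquiv.surjective j
    rcases i with i | i <;> rcases j with j | j <;>
      simp [e, stdIdem, Matrix.diagonal_apply, Matrix.one_apply, Fin.ext_iff] <;> omega
  refine ⟨s, (Matrix.fromCols B B').submatrix id e, (Matrix.fromRows C C').submatrix e id,
    by omega, ?_, ?_, ?_⟩
  · rw [Matrix.submatrix_mul_equiv, hUU]; simp
  · rw [← Matrix.submatrix_mul _ _ _ _ _ Function.bijective_id, hUU']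
    simp
  · rw [← hmid, Matrix.submatrix_mul_equiv, Matrix.submatrix_mul_equiv, Matrix.fromCols_mul_fromBlocks,
      Matrix.fromCols_mul_fromRows]
    simp [h1]

lemma stdIdem_minors {l s k : ℕ} (hk : s < k) : ∀ p ∈ minorsSet (stdIdem R l s) k, p = 0 := by
  rintro _ ⟨f, g, rfl⟩
  have : ∃ i, s ≤ (f i : ℕ) := by
    by_contra! hc
    have h := Fintype.card_le_of_injective (fun i => (⟨f i, hc i⟩ : Fin s)) (by
      intro a b hab
      exact f.injective (Fin.ext (by simpa using hab)))
    simp at h; omega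
  obtain ⟨i, hi⟩ := this
  apply Matrix.det_eq_zero_of_row_eq_zero i
  intro j
  simp [stdIdem, Matrix.diagonal_apply, Nat.not_lt.2 hi]

lemma span_minors_eq_bot {l m k : ℕ} {F : Matrix (Fin l) (Fin m) R} :
    (∀ p ∈ minorsSet F k, p = 0) ↔ Ideal.span (minorsSet F k) = ⊥ := by
  rw [Ideal.span_eq_bot]

lemma stdIdem_rank [IsDomain R] {l s r : ℕ} (hs : s ≤ l) {d : R} (hd : d ≠ 0)
    (h : ∀ p ∈ minorsSet (d • stdIdem R l s) (r + 1), p = 0) : s ≤ r := by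
  by_contra! hlt
  have h1 := h _ ⟨Fin.castLEEmb (by omega : r + 1 ≤ l), Fin.castLEEmb (by omega : r + 1 ≤ l), rfl⟩
  have h2 : (d • stdIdem R l s).submatrix (Fin.castLEEmb (by omega : r + 1 ≤ l))
      (Fin.castLEEmb (by omega : r + 1 ≤ l)) = Matrix.diagonal fun _ => d := by
    ext i j
    have : (i : ℕ) < s := by omega
    simp [stdIdem, Matrix.diagonal_apply, this]
  rw [h2, Matrix.det_diagonal] at h1
  simp [hd] at h1

theorem main_general [IsDomain R] (hR : ProjFree R) {l m r : ℕ} (hl : r ≤ l) (hm : r ≤ m)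
    (F : Matrix (Fin l) (Fin m) R) (hrank : HasRank F r) (hJr : JkUnit F r) :
    ∃ F1 : Matrix (Fin r) (Fin r) R, MatEquiv F (padM l m F1) := by
  obtain ⟨d, hd, htop⟩ := hJr
  obtain ⟨⟨p, hp, hp0⟩, hF⟩ := hrank
  have hd0 : d ≠ 0 := by
    rintro rfl
    exact hp0 (zero_dvd_iff.1 (hd.1 p hp))
  obtain ⟨G, E, E', hE, hE', hEF, hFE, h2, h3⟩ := exists_idempotents F hF hd.1 htop hd0
  obtain ⟨s, U, U', hs, hU, hU', hEU⟩ := idem_diag hR E hE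
  obtain ⟨t, V, V', ht, hV, hV', hEV⟩ := idem_diag hR E' hE'
  have hUD : U' * E * U = stdIdem R l s := by
    rw [hEU]; simp only [Matrix.mul_assoc]; rw [hU', Matrix.mul_one, ← Matrix.mul_assoc, hU',
      Matrix.one_mul]
  have hVD : V' * E' * V = stdIdem R m t := by
    rw [hEV]; simp only [Matrix.mul_assoc]; rw [hV', Matrix.mul_one, ← Matrix.mul_assoc, hV',
      Matrix.one_mul]
  rw [span_minors_eq_bot] at hF
  have hsr : s = r := by
    apply le_antisymm
    · apply stdIdem_rank hs hd0
      rw [span_minors_eq_bot, eq_bot_iff, ← hF, ← hUD, ← Matrix.smul_mul, ← Matrix.mul_smul, ← h2,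
        Matrix.mul_assoc, Matrix.mul_assoc]
      exact (span_minors_mul_right _ _).trans (span_minors_mul_left _ _)
    · by_contra! hlt
      have h := span_minors_eq_bot.1 (stdIdem_minors (R := R) (l := l) hlt)
      have h' : Ideal.span (minorsSet F r) ≤ ⊥ := by
        rw [← h, ← hEF, hEU]
        exact (span_minors_mul_left _ _).trans ((span_minors_mul_left _ _).trans
          (span_minors_mul_right _ _))
      exact hp0 (by simpa using h' (Ideal.subset_span hp))
  have htr : t = r := by
    apply le_antisymm
    · apply stdIdem_rank ht hd0
      rw [span_minors_eq_bot, eq_bot_iff, ← hF, ← hVD, ← Matrix.smul_mul, ← Matrix.mul_smul, ← h3,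
        Matrix.mul_assoc, Matrix.mul_assoc]
      exact (span_minors_mul_right _ _).trans ((span_minors_mul_right _ _).trans
        (span_minors_mul_left _ _))
    · by_contra! hlt
      have h := span_minors_eq_bot.1 (stdIdem_minors (R := R) (l := m) hlt)
      have h' : Ideal.span (minorsSet F r) ≤ ⊥ := by
        rw [← h, ← hFE, hEV]
        exact (span_minors_mul_right _ _).trans ((span_minors_mul_left _ _).trans
          (span_minors_mul_right _ _))
      exact hp0 (by simpa using h' (Ideal.subset_span hp))
  subst hsr
  subst htr
  refine ⟨(U' * F * V).submatrix (Fin.castLE hl) (Fin.castLE hm), U, V',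
    (Matrix.isUnit_det_of_right_inverse hU), (Matrix.isUnit_det_of_right_inverse hV'), ?_⟩
  have hpad : padM l m ((U' * F * V).submatrix (Fin.castLE hl) (Fin.castLE hm)) =
      stdIdem R l t * (U' * F * V) * stdIdem R m t := by
    ext i j
    rw [stdIdem, stdIdem, Matrix.mul_diagonal, Matrix.diagonal_mul]
    by_cases hi : (i : ℕ) < t <;> by_cases hj : (j : ℕ) < t <;> simp [padM, hi, hj]
  rw [hpad]
  calc F = E * F * E' := by rw [hEF, hFE]
    _ = _ := by rw [hEU, hEV]; simp only [Matrix.mul_assoc]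

end Idem

/-- The conclusion asserts the existence of `F'₁ ∈ R^{r×r}` such that `F` is
equivalent to the `l × m` block matrix with `F'₁` in the upper-left corner and zeros elsewhere,
`det F'₁` is a gcd of the `r × r` minors of `F` (i.e. is associated to `d_r(F)`), and for each
`k = 1, …, r` the ideals of reduced minors coincide: `J_k(F'₁) = J_k(F)`. -/
theorem statement16 {K : Type*} [Field K] (n : ℕ) (hn : 2 ≤ n) (l m r : ℕ) (hlm : l < m)
    (hr1 : 1 ≤ r) (hrl : r ≤ l)
    (F : Matrix (Fin l) (Fin m) (MvPolynomial (Fin n) K))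
    (hrank : HasRank F r)
    (hJr : JkUnit F r) :
    ∃ F'₁ : Matrix (Fin r) (Fin r) (MvPolynomial (Fin n) K),
      MatEquiv F (Matrix.of fun i : Fin l => fun j : Fin m =>
        if hi : (i : ℕ) < r then
          if hj : (j : ℕ) < r then F'₁ ⟨(i : ℕ), hi⟩ ⟨(j : ℕ), hj⟩ else 0
        else 0) ∧
      IsGcdMinors F r F'₁.det ∧
      (∀ k : ℕ, 1 ≤ k → k ≤ r →
        ∀ d d' : MvPolynomial (Fin n) K, IsGcdMinors F k d → IsGcdMinors F'₁ k d' →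
          reducedIdeal F'₁ k d' = reducedIdeal F k d) := by
  have hrm : r ≤ m := by omega
  obtain ⟨F1, h⟩ := main_general (projFree_mvPolynomial K n) hrl hrm F hrank hJr
  have hspan : ∀ k, Ideal.span (minorsSet F k) = Ideal.span (minorsSet F1 k) := fun k =>
    (span_minors_of_matEquiv h).trans (span_minors_pad hrl hrm F1)
  refine ⟨F1, h, ?_, ?_⟩
  · rw [isGcdMinors_iff, hspan, ← isGcdMinors_iff]
    exact isGcdMinors_det F1
  · intro k _ hk d d' hd hd'
    exact reducedIdeal_congr (hspan k) (by omega) (by omega) hk hk hd hd'
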